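/- arXiv:2112.13919 — 8 statements merged into one kernel-verified Lean document; each statement's English description precedes it below -/
import Mathlib

section
/- Let α be a real algebraic number of degree d ≥ 3 over ℚ and let β ∈ ℚ(α) be irrational. Let μ be a real number with d/2 + 1 < μ < d and let C₀ > 0. Then there exist positive real numbers C₁ and C₂ (depending only on α, β, μ and C₀) with the following property: if x₁/y₁ and x₂/y₂ are rational numbers in lowest terms with H(x₂,y₂) ≥ H(x₁,y₁) ≥ C₁, |α − x₁/y₁| < C₀/H(x₁,y₁)^μ and |β − x₂/y₂| < C₀/H(x₂,y₂)^μ, then either H(x₂,y₂) > C₂⁻¹ · H(x₁,y₁)^{μ − d/2}, or there exist integers s, t, u, v with sv − tu ≠ 0 such that β = (sα + t)/(uα + v) and x₂/y₂ = (s x₁ + t y₁)/(u x₁ + v y₁). -/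
/-!
Write `β = P(α) / Q(α)` with integer polynomials `P`, `Q` of least possible degree bound `r`. The
space of pairs of rational polynomials of degree at most `d / 2` has dimension greater than `d`,
so `r ≤ d / 2`. Minimality makes `P` and `Q` coprime, and it makes `α` a simple zero of
`G(z) = P(z) - β Q(z)`, since otherwise `(P', Q')` would be a smaller pair
(`exists_min_pair`). Put `z = x₁ / y₁`, `w = x₂ / y₂`, `H = H(x₁, y₁)`, `h = H(x₂, y₂)`.

If `P(z) ≠ w Q(z)`, the difference is a nonzero rational with denominator dividing `y₁ ^ r * y₂`,
hence at least `1 / (H ^ r * h)`; on the other hand `P(z) - w Q(z) = G(z) + (β - w) Q(z)` is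
`O(H ^ (-μ))`. So `h` is at least a constant times `H ^ (μ - r)`, and `r ≤ d / 2`.

If `P(z) = w Q(z)` and `r = 1`, this equality is the Möbius relation (`exists_moebius`).

If `P(z) = w Q(z)` and `r ≥ 2`, coprimality bounds the cancellation in the fraction
`P(z) / Q(z)`, so `y₂` is at least a constant times `y₁ ^ r` (`exists_denominator_bound`). As `α`
is a simple zero of `G`, `|α - z|` is `O(|G(z)|) = O(|β - w|) = O(y₁ ^ (-2 μ))`. Since
`2 μ > d + 2`, Liouville's inequality bounds `y₁`, and hence `H`; this is excluded by taking `C₁`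
large.
-/

/-- The height `H(x, y) = max (|x|, |y|)` of a rational number `x/y` in lowest terms,
as a real number. -/
noncomputable def ratHeight (x y : ℤ) : ℝ := max |(x : ℝ)| |(y : ℝ)|

open Polynomial

/-! ### Pairs of polynomials representing `β` -/

/-- `HasPair α β r` says that `β` is represented as `P(α) / Q(α)` by a nonzero pair of rational
polynomials of degree at most `r`, in the denominator-free form `P(α) = β Q(α)`. -/
def HasPair (α β : ℝ) (r : ℕ) : Prop :=
  ∃ P Q : ℚ[X], (P ≠ 0 ∨ Q ≠ 0) ∧ P.natDegree ≤ r ∧ Q.natDegree ≤ r ∧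
    aeval α P = β * aeval α Q

/-- The linear map `(P, Q) ↦ P(α) - β Q(α)` from pairs of polynomials of degree at most `d / 2` to
`ℚ(α)` goes from dimension `2 (d / 2 + 1) > d` to dimension `d`, so its kernel is nonzero. -/
lemma hasPair_half {d : ℕ} {α β : ℝ} (hα : IsAlgebraic ℚ α)
    (hdeg : (minpoly ℚ α).natDegree = d) (hβ : β ∈ Algebra.adjoin ℚ {α}) :
    HasPair α β (d / 2) := by
  set n := d / 2 + 1 with hn
  let pb := Algebra.adjoin.powerBasis (K := ℚ) hα.isIntegral
  have : FiniteDimensional ℚ (Algebra.adjoin ℚ {α}) := pb.finite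
  have hfr : Module.finrank ℚ (Algebra.adjoin ℚ {α}) = d := by
    rw [pb.finrank, Algebra.adjoin.powerBasis_dim, hdeg]
  have : FiniteDimensional ℚ (degreeLT ℚ n) := (degreeLTEquiv ℚ n).symm.finiteDimensional
  have hfn : Module.finrank ℚ (degreeLT ℚ n) = n := by
    rw [(degreeLTEquiv ℚ n).finrank_eq]; simp
  let a : Algebra.adjoin ℚ {α} := ⟨α, Algebra.subset_adjoin (Set.mem_singleton α)⟩
  let b : Algebra.adjoin ℚ {α} := ⟨β, hβ⟩
  let e : degreeLT ℚ n →ₗ[ℚ] Algebra.adjoin ℚ {α} :=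
    (aeval a).toLinearMap ∘ₗ (degreeLT ℚ n).subtype
  let f : (degreeLT ℚ n × degreeLT ℚ n) →ₗ[ℚ] Algebra.adjoin ℚ {α} :=
    e.coprod (-(LinearMap.mulLeft ℚ b ∘ₗ e))
  have hker : LinearMap.ker f ≠ ⊥ := by
    apply LinearMap.ker_ne_bot_of_finrank_lt
    rw [Module.finrank_prod, hfr, hfn]
    omega
  obtain ⟨⟨P, Q⟩, hPQ, hne⟩ := (Submodule.ne_bot_iff _).1 hker
  have hdegle (p : degreeLT ℚ n) : (p : ℚ[X]).natDegree ≤ d / 2 := by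
    have := mem_degreeLT.1 p.2
    rcases eq_or_ne (p : ℚ[X]) 0 with h | h
    · simp [h]
    · have := (natDegree_lt_iff_degree_lt h).2 this
      omega
  refine ⟨P, Q, ?_, hdegle P, hdegle Q, ?_⟩
  · by_contra! h
    apply hne
    ext1 <;> ext1 <;> simp [h.1, h.2]
  · have h0 : f (P, Q) = 0 := hPQ
    have h1 : aeval a (P : ℚ[X]) = b * aeval a (Q : ℚ[X]) := by
      simpa [f, e, add_neg_eq_zero] using h0
    have h2 := congrArg (Subalgebra.val _) h1
    rw [map_mul, ← aeval_algHom_apply, ← aeval_algHom_apply] at h2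
    exact h2

lemma exists_int_multiple (p q : ℚ[X]) : ∃ n : ℤ, n ≠ 0 ∧ ∃ p₀ q₀ : ℤ[X],
    p₀.map (Int.castRingHom ℚ) = C (n : ℚ) * p ∧ q₀.map (Int.castRingHom ℚ) = C (n : ℚ) * q := by
  obtain ⟨m, hm, hp⟩ := IsLocalization.integerNormalization_spec (nonZeroDivisors ℤ) p
  obtain ⟨n, hn, hq⟩ := IsLocalization.integerNormalization_spec (nonZeroDivisors ℤ) q
  set p₁ := IsLocalization.integerNormalization (nonZeroDivisors ℤ) p
  set q₁ := IsLocalization.integerNormalization (nonZeroDivisors ℤ) q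
  refine ⟨m * n, mul_ne_zero (nonZeroDivisors.ne_zero hm) (nonZeroDivisors.ne_zero hn),
    C n * p₁, C m * q₁, ?_, ?_⟩
  · rw [Polynomial.map_mul, ← algebraMap_int_eq, hp]
    simp [Algebra.smul_def]
    ring
  · rw [Polynomial.map_mul, ← algebraMap_int_eq, hq]
    simp [Algebra.smul_def]
    ring

/-- A pair `(P, Q)` with `P(α) = β Q(α)` of least degree bound, with denominators cleared. The
condition on derivatives says that `α` is a simple zero of `P - β Q`; the last line is coprimality
over `ℚ`. -/
lemma exists_min_pair {d : ℕ} (hd : 3 ≤ d) {α β : ℝ} (hα : IsAlgebraic ℚ α)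
    (hdeg : (minpoly ℚ α).natDegree = d) (hβ : β ∈ Algebra.adjoin ℚ {α})
    (hirr : Irrational β) :
    ∃ (r : ℕ) (P Q : ℤ[X]), 1 ≤ r ∧ 2 * r ≤ d ∧ P.natDegree ≤ r ∧ Q.natDegree ≤ r ∧
      (P.coeff r ≠ 0 ∨ Q.coeff r ≠ 0) ∧
      aeval α P = β * aeval α Q ∧ aeval α Q ≠ 0 ∧
      aeval α (derivative P) ≠ β * aeval α (derivative Q) ∧
      ∃ (A B : ℤ[X]) (N : ℤ), N ≠ 0 ∧ A * P + B * Q = C N := by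
  classical
  have hex : ∃ r, HasPair α β r := ⟨_, hasPair_half hα hdeg hβ⟩
  set r := Nat.find hex with hr
  have hmin : ∀ k < r, ¬ HasPair α β k := fun k hk => Nat.find_min hex hk
  have hrle : r ≤ d / 2 := Nat.find_min' hex (hasPair_half hα hdeg hβ)
  obtain ⟨P, Q, hne, hP, hQ, hPQ⟩ := Nat.find_spec hex
  rw [← hr] at hP hQ
  have hroot (p : ℚ[X]) (hp : p ≠ 0) (hp' : p.natDegree ≤ r) : aeval α p ≠ 0 := by
    intro h
    have := natDegree_le_natDegree (minpoly.degree_le_of_ne_zero ℚ α hp h)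
    omega
  have hQ0 : Q ≠ 0 := by
    rintro rfl
    rcases hne with h | h
    · exact hroot P h hP (by simpa using hPQ)
    · exact h rfl
  have hQα := hroot Q hQ0 hQ
  have hr1 : 1 ≤ r := by
    by_contra! h
    have h0 : r = 0 := by omega
    rw [h0, Nat.le_zero] at hP hQ
    rw [eq_C_of_natDegree_eq_zero hP, eq_C_of_natDegree_eq_zero hQ, aeval_C, aeval_C] at hPQ
    rw [eq_C_of_natDegree_eq_zero hQ, aeval_C] at hQα
    apply hirr
    refine ⟨P.coeff 0 / Q.coeff 0, ?_⟩
    rw [Rat.cast_div]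
    exact (div_eq_iff hQα).2 hPQ
  have htop : P.coeff r ≠ 0 ∨ Q.coeff r ≠ 0 := by
    by_contra! h
    have aux (p : ℚ[X]) (hp : p.natDegree ≤ r) (h : p.coeff r = 0) : p.natDegree ≤ r - 1 := by
      rw [natDegree_le_iff_coeff_eq_zero] at hp ⊢
      intro k hk
      rcases eq_or_lt_of_le (show r ≤ k by omega) with h1 | h1
      · rw [← h1, h]
      · exact hp k h1
    exact hmin (r - 1) (by omega) ⟨P, Q, hne, aux P hP h.1, aux Q hQ h.2, hPQ⟩
  -- A double zero of `P - β Q` at `α` would make `(P', Q')` a smaller pair.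
  have hder : aeval α (derivative P) ≠ β * aeval α (derivative Q) := by
    intro h
    refine hmin (r - 1) (by omega) ⟨derivative P, derivative Q, ?_,
      (natDegree_derivative_le _).trans (by omega), (natDegree_derivative_le _).trans (by omega), h⟩
    rw [derivative_ne_zero, derivative_ne_zero]
    refine htop.imp (fun h => ?_) fun h => ?_ <;>
    · have := le_natDegree_of_ne_zero h
      omega
  -- A common factor has degree at most `r < d`, so it does not vanish at `α` and can be divided out.
  have hcop : IsCoprime P Q := by
    apply isCoprime_of_dvd _ _ (fun h => hQ0 h.2)
    rintro D hDu hD0 ⟨P', rfl⟩ ⟨Q', rfl⟩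
    have hQ'0 : Q' ≠ 0 := right_ne_zero_of_mul hQ0
    have hD1 : D.natDegree ≠ 0 := by
      intro h
      exact hDu (isUnit_iff_degree_eq_zero.2 ((degree_eq_iff_natDegree_eq hD0).2 h))
    have hQdeg := natDegree_mul hD0 hQ'0
    have hDα := hroot D hD0 (by omega)
    refine hmin (r - 1) (by omega) ⟨P', Q', Or.inr hQ'0, ?_, by omega, ?_⟩
    · rcases eq_or_ne P' 0 with rfl | hP'0
      · simp
      · have := natDegree_mul hD0 hP'0
        omega
    · rw [map_mul, map_mul] at hPQ
      apply mul_left_cancel₀ hDα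
      rw [hPQ]; ring
  obtain ⟨a, b, hab⟩ := hcop
  obtain ⟨n, hn, P₀, Q₀, hP₀, hQ₀⟩ := exists_int_multiple P Q
  obtain ⟨m, hm, A, B, hA, hB⟩ := exists_int_multiple a b
  have hnQ : (n : ℚ) ≠ 0 := by exact_mod_cast hn
  have hnR : (n : ℝ) ≠ 0 := by exact_mod_cast hn
  have hinj : Function.Injective (Int.castRingHom ℚ) := Int.cast_injective
  have haeval (p : ℚ[X]) (p₀ : ℤ[X]) (h : p₀.map (Int.castRingHom ℚ) = C (n : ℚ) * p) :
      aeval α p₀ = n * aeval α p := by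
    rw [← aeval_map_algebraMap ℚ, algebraMap_int_eq, h]
    simp
  have hdegree (p : ℚ[X]) (p₀ : ℤ[X]) (h : p₀.map (Int.castRingHom ℚ) = C (n : ℚ) * p) :
      p₀.natDegree = p.natDegree := by
    rw [← natDegree_map_eq_of_injective hinj, h, natDegree_C_mul hnQ]
  have hcoeff (p : ℚ[X]) (p₀ : ℤ[X]) (h : p₀.map (Int.castRingHom ℚ) = C (n : ℚ) * p)
      (hp : p.coeff r ≠ 0) : p₀.coeff r ≠ 0 := by
    intro h0
    have := congrArg (fun q => q.coeff r) h
    simp [h0, hn, hp] at this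
  have hderiv (p : ℚ[X]) (p₀ : ℤ[X]) (h : p₀.map (Int.castRingHom ℚ) = C (n : ℚ) * p) :
      (derivative p₀).map (Int.castRingHom ℚ) = C (n : ℚ) * derivative p := by
    rw [← derivative_map, h, derivative_C_mul]
  refine ⟨r, P₀, Q₀, hr1, by omega, (hdegree _ _ hP₀).trans_le hP, (hdegree _ _ hQ₀).trans_le hQ,
    htop.imp (hcoeff _ _ hP₀) (hcoeff _ _ hQ₀), ?_, ?_, ?_, A, B, m * n, mul_ne_zero hm hn, ?_⟩
  · rw [haeval _ _ hP₀, haeval _ _ hQ₀, hPQ]; ring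
  · rw [haeval _ _ hQ₀]; exact mul_ne_zero hnR hQα
  · rw [haeval _ _ (hderiv _ _ hP₀), haeval _ _ (hderiv _ _ hQ₀)]
    intro h
    apply hder
    apply mul_left_cancel₀ hnR
    rw [h]; ring
  · apply map_injective _ hinj
    rw [Polynomial.map_add, Polynomial.map_mul, Polynomial.map_mul, hA, hB, hP₀, hQ₀]
    have : (C (m : ℚ) * C (n : ℚ)) * (a * P + b * Q) = C (m : ℚ) * C (n : ℚ) := by
      rw [hab, mul_one]
    rw [Polynomial.map_C, eq_intCast, Int.cast_mul, C_mul, ← this]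
    ring

/-! ### Values of homogenized polynomials -/

/-- The value at `(x, y)` of the degree `r` homogenization of `P`. -/
def homEval (P : ℤ[X]) (r : ℕ) (x y : ℤ) : ℤ :=
  ∑ i ∈ Finset.range (r + 1), P.coeff i * x ^ i * y ^ (r - i)

lemma homEval_cast {P : ℤ[X]} {r : ℕ} (hP : P.natDegree ≤ r) (x : ℤ) {y : ℤ} (hy : y ≠ 0) :
    (homEval P r x y : ℝ) = (y : ℝ) ^ r * aeval ((x : ℝ) / y) P := by
  have hy' : (y : ℝ) ≠ 0 := by exact_mod_cast hy
  rw [aeval_eq_sum_range' (Nat.lt_succ_of_le hP), homEval, Finset.mul_sum]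
  push_cast
  refine Finset.sum_congr rfl fun i hi => ?_
  have hi : i ≤ r := Nat.lt_succ_iff.1 (Finset.mem_range.1 hi)
  rw [zsmul_eq_mul, div_pow, ← Nat.sub_add_cancel hi, pow_add]
  simp only [Nat.add_sub_cancel]
  field_simp

/-- The homogenization is its leading term in `x` modulo `y`. -/
lemma homEval_eq_add (P : ℤ[X]) (r : ℕ) (x y : ℤ) :
    ∃ w, homEval P r x y = P.coeff r * x ^ r + y * w := by
  have : y ∣ ∑ i ∈ Finset.range r, P.coeff i * x ^ i * y ^ (r - i) := by
    refine Finset.dvd_sum fun i hi => Dvd.dvd.mul_left (dvd_pow_self y ?_) _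
    have := Finset.mem_range.1 hi
    omega
  obtain ⟨w, hw⟩ := this
  exact ⟨w, by rw [homEval, Finset.sum_range_succ, hw]; simp [add_comm]⟩

/-- Modulo `g`, `a x ^ r` is a multiple of `y`, so `N a ^ K x ^ (r K)` vanishes; so does
`N a ^ K y ^ K`, and `x`, `y` are coprime. -/
lemma dvd_of_dvd_mul_pow {g N a x y w : ℤ} {K r : ℕ} (hxy : IsCoprime x y)
    (h₁ : g ∣ N * y ^ K) (h₂ : g ∣ a * x ^ r + y * w) : g ∣ N * a ^ K := by
  have h3 : g ∣ (a * x ^ r) ^ K - (-(y * w)) ^ K :=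
    (by simpa using h₂ : g ∣ a * x ^ r - -(y * w)).trans (sub_dvd_pow_sub_pow _ _ K)
  have h4 : g ∣ N * a ^ K * x ^ (r * K) := by
    have h5 := dvd_add (h3.mul_left N) (h₁.mul_right ((-w) ^ K))
    have h6 : N * ((a * x ^ r) ^ K - (-(y * w)) ^ K) + N * y ^ K * (-w) ^ K
        = N * a ^ K * x ^ (r * K) := by
      rw [← mul_neg, mul_pow, mul_pow, pow_mul]; ring
    rwa [h6] at h5
  have h7 : g ∣ N * a ^ K * y ^ K := by
    rw [mul_right_comm]; exact h₁.mul_right _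
  obtain ⟨p, q, hpq⟩ : IsCoprime (x ^ (r * K)) (y ^ K) := hxy.pow
  have := dvd_add (h4.mul_left p) (h7.mul_left q)
  rwa [show p * (N * a ^ K * x ^ (r * K)) + q * (N * a ^ K * y ^ K)
    = N * a ^ K * (p * x ^ (r * K) + q * y ^ K) by ring, hpq, mul_one] at this

/-- The homogenizations of coprime polynomials, at least one of which has exact degree `r`, take
values at coprime arguments whose common divisors all divide one fixed integer. -/
lemma exists_common_divisor_bound {P Q A B : ℤ[X]} {N : ℤ} {r : ℕ} (hP : P.natDegree ≤ r)
    (hQ : Q.natDegree ≤ r) (htop : P.coeff r ≠ 0 ∨ Q.coeff r ≠ 0) (hN : N ≠ 0)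
    (hAB : A * P + B * Q = C N) :
    ∃ M : ℤ, M ≠ 0 ∧ ∀ x y g : ℤ, y ≠ 0 → IsCoprime x y →
      g ∣ homEval P r x y → g ∣ homEval Q r x y → g ∣ M := by
  set s := max A.natDegree B.natDegree
  have key (x y g : ℤ) (hy : y ≠ 0) (hgP : g ∣ homEval P r x y) (hgQ : g ∣ homEval Q r x y) :
      g ∣ N * y ^ (s + r) := by
    have h := congrArg (aeval ((x : ℝ) / y)) hAB
    rw [map_add, map_mul, map_mul, aeval_C] at h
    have : homEval A s x y * homEval P r x y + homEval B s x y * homEval Q r x y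
        = N * y ^ (s + r) := by
      have : ((homEval A s x y * homEval P r x y + homEval B s x y * homEval Q r x y : ℤ) : ℝ)
          = ((N * y ^ (s + r) : ℤ) : ℝ) := by
        push_cast
        rw [homEval_cast hP x hy, homEval_cast hQ x hy, homEval_cast (le_max_left _ _) x hy,
          homEval_cast (le_max_right _ _) x hy]
        rw [show (N : ℝ) = algebraMap ℤ ℝ N from rfl, ← h, pow_add]
        ring
      exact_mod_cast this
    rw [← this]
    exact dvd_add (hgP.mul_left _) (hgQ.mul_left _)
  rcases htop with h | h
  · refine ⟨N * P.coeff r ^ (s + r), mul_ne_zero hN (pow_ne_zero _ h), ?_⟩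
    intro x y g hy hxy hgP hgQ
    obtain ⟨w, hw⟩ := homEval_eq_add P r x y
    exact dvd_of_dvd_mul_pow hxy (key x y g hy hgP hgQ) (hw ▸ hgP)
  · refine ⟨N * Q.coeff r ^ (s + r), mul_ne_zero hN (pow_ne_zero _ h), ?_⟩
    intro x y g hy hxy hgP hgQ
    obtain ⟨w, hw⟩ := homEval_eq_add Q r x y
    exact dvd_of_dvd_mul_pow hxy (key x y g hy hgP hgQ) (hw ▸ hgQ)

/-- Height lower bound: if `x₂ / y₂ = P(x₁ / y₁) / Q(x₁ / y₁)` in lowest terms, then `y₂` is the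
homogenized denominator up to a bounded factor. -/
lemma exists_denominator_bound {P Q A B : ℤ[X]} {N : ℤ} {r : ℕ} (hP : P.natDegree ≤ r)
    (hQ : Q.natDegree ≤ r) (htop : P.coeff r ≠ 0 ∨ Q.coeff r ≠ 0) (hN : N ≠ 0)
    (hAB : A * P + B * Q = C N) :
    ∃ M : ℝ, 0 < M ∧ ∀ x₁ y₁ x₂ y₂ : ℤ, 0 < y₁ → 0 < y₂ → IsCoprime x₁ y₁ → IsCoprime x₂ y₂ →
      homEval P r x₁ y₁ * y₂ = x₂ * homEval Q r x₁ y₁ →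
      |(homEval Q r x₁ y₁ : ℝ)| ≤ M * y₂ := by
  obtain ⟨M, hM, h⟩ := exists_common_divisor_bound hP hQ htop hN hAB
  refine ⟨|(M : ℝ)|, by positivity, fun x₁ y₁ x₂ y₂ hy₁ hy₂ hc₁ hc₂ heq => ?_⟩
  obtain ⟨g, hg⟩ : y₂ ∣ homEval Q r x₁ y₁ :=
    hc₂.symm.dvd_of_dvd_mul_left (heq ▸ dvd_mul_left _ _)
  have hPg : homEval P r x₁ y₁ = x₂ * g := by
    apply mul_right_cancel₀ hy₂.ne'
    rw [heq, hg]; ring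
  have hgM := h x₁ y₁ g hy₁.ne' hc₁ (hPg ▸ dvd_mul_left _ _) (hg ▸ dvd_mul_left _ _)
  have hle : |g| ≤ |M| := Int.le_of_dvd (abs_pos.2 hM) ((abs_dvd_abs _ _).2 hgM)
  have hle' : |(g : ℝ)| ≤ |(M : ℝ)| := by exact_mod_cast hle
  have hy₂' : (0 : ℝ) < y₂ := by exact_mod_cast hy₂
  rw [hg, Int.cast_mul, abs_mul, abs_of_pos hy₂', mul_comm]
  exact mul_le_mul_of_nonneg_right hle' hy₂'.le

/-! ### Diophantine approximation -/

/-- Liouville's inequality with exponent the degree of `α`. -/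
lemma exists_liouville_bound {d : ℕ} (hd : 3 ≤ d) {α : ℝ} (hα : IsAlgebraic ℚ α)
    (hdeg : (minpoly ℚ α).natDegree = d) :
    ∃ A : ℝ, 0 < A ∧ ∀ x y : ℤ, 0 < y → 1 ≤ (y : ℝ) ^ d * (|α - x / y| * A) := by
  have hirr : Irrational α := by
    rintro ⟨q, rfl⟩
    have h := minpoly.eq_X_sub_C ℝ q
    rw [eq_ratCast] at h
    rw [h, natDegree_X_sub_C] at hdeg
    omega
  obtain ⟨n, hn, f, -, hf, -⟩ := exists_int_multiple (minpoly ℚ α) 0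
  have hnQ : (n : ℚ) ≠ 0 := by exact_mod_cast hn
  have hfd : f.natDegree = d := by
    rw [← natDegree_map_eq_of_injective (f := Int.castRingHom ℚ) Int.cast_injective, hf,
      natDegree_C_mul hnQ, hdeg]
  have hf0 : f ≠ 0 := by
    rintro rfl
    simp at hfd
    omega
  have hfα : eval α (f.map (algebraMap ℤ ℝ)) = 0 := by
    rw [eval_map_algebraMap, ← aeval_map_algebraMap ℚ, algebraMap_int_eq, hf]
    simp
  obtain ⟨A, hA, h⟩ := Liouville.exists_pos_real_of_irrational_root hirr hf0 hfα
  refine ⟨A, hA, fun x y hy => ?_⟩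
  have := h x (y - 1).toNat
  have hy' : (((y - 1).toNat : ℕ) : ℝ) + 1 = y := by
    have h1 : (((y - 1).toNat : ℕ) : ℤ) = y - 1 := Int.toNat_of_nonneg (by omega)
    have h2 : (((y - 1).toNat : ℕ) : ℝ) = ((y - 1 : ℤ) : ℝ) := by exact_mod_cast h1
    rw [h2]; push_cast; ring
  rwa [hy', hfd] at this

/-- Near `α`, a simple zero of `G = P - β Q`, the value `|G(z)|` is comparable to `|α - z|`, and
`|Q(z)|` lies between positive constants. -/
lemma exists_local_bounds {P Q : ℤ[X]} {α β : ℝ} (hPQ : aeval α P = β * aeval α Q)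
    (hQ : aeval α Q ≠ 0) (hder : aeval α (derivative P) ≠ β * aeval α (derivative Q)) :
    ∃ c q δ : ℝ, 0 < c ∧ 0 < q ∧ 0 < δ ∧ δ ≤ 1 ∧ ∀ z : ℝ, |α - z| < δ →
      c * |α - z| ≤ |aeval z P - β * aeval z Q| ∧
      |aeval z P - β * aeval z Q| ≤ 3 * c * |α - z| ∧
      q ≤ |aeval z Q| ∧ |aeval z Q| ≤ 3 * q := by
  set L := aeval α (derivative P) - β * aeval α (derivative Q) with hL
  have hL0 : 0 < |L| := abs_pos.2 (sub_ne_zero.2 hder)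
  have hQ0 : 0 < |aeval α Q| := abs_pos.2 hQ
  have hG : HasDerivAt (fun z : ℝ => aeval z P - β * aeval z Q) L α :=
    (P.hasDerivAt_aeval α).sub ((Q.hasDerivAt_aeval α).const_mul β)
  have h1 := (hasDerivAt_iff_isLittleO.1 hG).def (half_pos hL0)
  have h2 : ∀ᶠ z in nhds α, |aeval z Q - aeval α Q| < |aeval α Q| / 2 := by
    have hc : ContinuousAt (fun z : ℝ => aeval z Q) α := (Q.hasDerivAt_aeval α).continuousAt
    exact (Metric.tendsto_nhds.1 hc) _ (half_pos hQ0)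
  obtain ⟨δ, hδ, h⟩ := Metric.eventually_nhds_iff.1 (h1.and h2)
  refine ⟨|L| / 2, |aeval α Q| / 2, min δ 1, by positivity, by positivity,
    lt_min hδ one_pos, min_le_right _ _, fun z hz => ?_⟩
  have hz' : dist z α < δ := by
    rw [Real.dist_eq, abs_sub_comm]
    exact hz.trans_le (min_le_left _ _)
  obtain ⟨h3, h4⟩ := h hz'
  rw [hPQ, sub_self, sub_zero, smul_eq_mul, Real.norm_eq_abs, Real.norm_eq_abs] at h3
  rw [abs_sub_comm α z]
  have h5 : |(z - α) * L| = |L| * |z - α| := by rw [abs_mul, mul_comm]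
  have h6 := abs_sub_abs_le_abs_sub ((z - α) * L) (aeval z P - β * aeval z Q)
  have h7 := abs_sub_abs_le_abs_sub (aeval z P - β * aeval z Q) ((z - α) * L)
  rw [abs_sub_comm ((z - α) * L)] at h6
  have h8 := abs_sub_abs_le_abs_sub (aeval α Q) (aeval z Q)
  have h9 := abs_sub_abs_le_abs_sub (aeval z Q) (aeval α Q)
  rw [abs_sub_comm] at h8
  refine ⟨?_, ?_, ?_, ?_⟩ <;> linarith

/-- A pair of degree at most one is the required Möbius transformation; it is nondegenerate because
`β` is irrational. -/
lemma exists_moebius {P Q : ℤ[X]} {α β : ℝ} (hirr : Irrational β) (hP : P.natDegree ≤ 1)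
    (hQ : Q.natDegree ≤ 1) (hPQ : aeval α P = β * aeval α Q) (hQα : aeval α Q ≠ 0)
    {x₁ y₁ x₂ y₂ : ℤ} (hy₂ : 0 < y₂) (hne : homEval Q 1 x₁ y₁ ≠ 0)
    (heq : homEval P 1 x₁ y₁ * y₂ = x₂ * homEval Q 1 x₁ y₁) :
    ∃ s t u v : ℤ, s * v - t * u ≠ 0 ∧
      β = ((s : ℝ) * α + (t : ℝ)) / ((u : ℝ) * α + (v : ℝ)) ∧
      (x₂ : ℚ) / (y₂ : ℚ) =
        ((s * x₁ + t * y₁ : ℤ) : ℚ) / ((u * x₁ + v * y₁ : ℤ) : ℚ) := by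
  have hlin (p : ℤ[X]) (hp : p.natDegree ≤ 1) : aeval α p = p.coeff 1 * α + p.coeff 0 := by
    rw [aeval_eq_sum_range' (Nat.lt_succ_of_le hp)]
    simp [Finset.sum_range_succ, add_comm]
  have hhom (p : ℤ[X]) : homEval p 1 x₁ y₁ = p.coeff 1 * x₁ + p.coeff 0 * y₁ := by
    simp [homEval, Finset.sum_range_succ, add_comm]
  rw [hlin P hP, hlin Q hQ] at hPQ
  rw [hlin Q hQ] at hQα
  refine ⟨P.coeff 1, P.coeff 0, Q.coeff 1, Q.coeff 0, ?_, (eq_div_iff hQα).2 hPQ.symm, ?_⟩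
  · intro h0
    have h0' : (P.coeff 1 : ℝ) * Q.coeff 0 - P.coeff 0 * Q.coeff 1 = 0 := by exact_mod_cast h0
    -- A degenerate matrix has proportional rows, with the irrational factor `β`.
    have hu : (Q.coeff 1 : ℝ) * β = P.coeff 1 := by
      apply mul_right_cancel₀ hQα
      linear_combination (-(Q.coeff 1 : ℝ)) * hPQ - h0'
    have hv : (Q.coeff 0 : ℝ) * β = P.coeff 0 := by
      apply mul_right_cancel₀ hQα
      linear_combination (-(Q.coeff 0 : ℝ)) * hPQ + α * h0'
    have hrat (a b : ℤ) (h : (a : ℝ) * β = b) : a = 0 := by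
      by_contra ha
      have ha' : (a : ℝ) ≠ 0 := by exact_mod_cast ha
      refine hirr ⟨b / a, ?_⟩
      push_cast
      rw [div_eq_iff ha', ← h, mul_comm]
    exact hQα (by simp [hrat _ _ hu, hrat _ _ hv])
  · rw [← hhom, ← hhom, div_eq_div_iff (by exact_mod_cast hy₂.ne') (by exact_mod_cast hne)]
    exact_mod_cast heq.symm

/-- **A generalized Archimedean gap principle.** Let `α` be a real algebraic number of
degree `d ≥ 3` over `ℚ` and let `β ∈ ℚ(α)` be irrational. Let `μ` be a real number with
`d/2 + 1 < μ < d` and let `C₀ > 0`. Then there exist positive reals `C₁`, `C₂`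
(depending only on `α`, `β`, `μ`, `C₀`) such that: if `x₁/y₁` and `x₂/y₂` are rationals
in lowest terms with `H(x₂,y₂) ≥ H(x₁,y₁) ≥ C₁`, `|α − x₁/y₁| < C₀/H(x₁,y₁)^μ` and
`|β − x₂/y₂| < C₀/H(x₂,y₂)^μ`, then either `H(x₂,y₂) > C₂⁻¹·H(x₁,y₁)^(μ−d/2)`, or there
are integers `s, t, u, v` with `s·v − t·u ≠ 0` such that `β = (sα+t)/(uα+v)` and
`x₂/y₂ = (s·x₁+t·y₁)/(u·x₁+v·y₁)`. -/
theorem generalized_archimedean_gap_principle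
    (d : ℕ) (hd : 3 ≤ d) (α : ℝ) (hα : IsAlgebraic ℚ α)
    (hdeg : (minpoly ℚ α).natDegree = d)
    (β : ℝ) (hβmem : β ∈ Algebra.adjoin ℚ {α}) (hβirr : Irrational β)
    (μ C₀ : ℝ) (hμ₁ : (d : ℝ) / 2 + 1 < μ) (hμ₂ : μ < d) (hC₀ : 0 < C₀) :
    ∃ C₁ C₂ : ℝ, 0 < C₁ ∧ 0 < C₂ ∧
      ∀ x₁ y₁ x₂ y₂ : ℤ, 0 < y₁ → 0 < y₂ → IsCoprime x₁ y₁ → IsCoprime x₂ y₂ →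
        C₁ ≤ ratHeight x₁ y₁ → ratHeight x₁ y₁ ≤ ratHeight x₂ y₂ →
        |α - (x₁ : ℝ) / (y₁ : ℝ)| < C₀ / ratHeight x₁ y₁ ^ μ →
        |β - (x₂ : ℝ) / (y₂ : ℝ)| < C₀ / ratHeight x₂ y₂ ^ μ →
        (C₂⁻¹ * ratHeight x₁ y₁ ^ (μ - (d : ℝ) / 2) < ratHeight x₂ y₂ ∨
          ∃ s t u v : ℤ, s * v - t * u ≠ 0 ∧
            β = ((s : ℝ) * α + (t : ℝ)) / ((u : ℝ) * α + (v : ℝ)) ∧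
            (x₂ : ℚ) / (y₂ : ℚ) =
              ((s * x₁ + t * y₁ : ℤ) : ℚ) / ((u * x₁ + v * y₁ : ℤ) : ℚ)) := by
  obtain ⟨r, P, Q, hr1, hrd, hP, hQ, htop, hPQ, hQα, hder, A, B, N, hN, hAB⟩ :=
    exists_min_pair hd hα hdeg hβmem hβirr
  obtain ⟨M, hM, hden⟩ := exists_denominator_bound hP hQ htop hN hAB
  obtain ⟨c, q, δ, hc, hq, hδ, hδ1, hloc⟩ := exists_local_bounds hPQ hQα hder
  obtain ⟨Λ, hΛ, hliou⟩ := exists_liouville_bound hd hα hdeg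
  have hμ0 : 1 < μ := by
    have : (0 : ℝ) ≤ d := by positivity
    linarith
  -- `e` is the constant in `y₂ ≥ e * y₁ ^ 2`, `Y` the resulting bound for `y₁` when `r ≥ 2`, and
  -- `E` the constant in `|P(z) - w Q(z)| ≤ E / H ^ μ`.
  set e := q / M with he
  have he0 : 0 < e := by positivity
  set Y := 3 * q * C₀ * Λ / (c * e ^ μ) with hY
  have hY0 : 0 < Y := by positivity
  set E := 3 * c * C₀ + 3 * q * C₀ with hE
  have hE0 : 0 < E := by positivity
  refine ⟨1 + C₀ / δ + (|α| + 1) * Y, 2 * E, by positivity, by positivity, ?_⟩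
  intro x₁ y₁ x₂ y₂ hy₁ hy₂ hc₁ hc₂ hC₁ hle h₁ h₂
  set H := ratHeight x₁ y₁ with hH
  set h := ratHeight x₂ y₂ with hh
  have hpos : 0 < C₀ / δ := by positivity
  have hpos' : 0 < (|α| + 1) * Y := by positivity
  have hH1 : 1 ≤ H := by linarith
  have hH0 : 0 < H := by linarith
  have hh0 : 0 < h := by linarith
  have hy₁' : (1 : ℝ) ≤ y₁ := by exact_mod_cast hy₁
  have hy₂' : (1 : ℝ) ≤ y₂ := by exact_mod_cast hy₂
  have hy₁0 : (0 : ℝ) < y₁ := by linarith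
  have hy₂0 : (0 : ℝ) < y₂ := by linarith
  have hyH : (y₁ : ℝ) ≤ H := (le_abs_self _).trans (le_max_right _ _)
  have hyh : (y₂ : ℝ) ≤ h := (le_abs_self _).trans (le_max_right _ _)
  set z : ℝ := (x₁ : ℝ) / y₁ with hz
  set w : ℝ := (x₂ : ℝ) / y₂ with hw
  have hzδ : |α - z| < δ := by
    refine h₁.trans_le ?_
    rw [div_le_iff₀ (by positivity)]
    have h3 : H ≤ H ^ μ := by
      simpa using Real.rpow_le_rpow_of_exponent_le hH1 hμ0.le
    have h4 : C₀ / δ ≤ H ^ μ := by linarith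
    rw [div_le_iff₀ hδ] at h4
    linarith
  obtain ⟨hG1, hG2, hQ1, hQ2⟩ := hloc z hzδ
  have hPz := homEval_cast hP x₁ hy₁.ne'
  have hQz := homEval_cast hQ x₁ hy₁.ne'
  rw [← hz] at hPz hQz
  have hHκ : H ≤ (|α| + 1) * y₁ := by
    refine max_le ?_ ?_
    · have h3 : |z| ≤ |α| + 1 := by
        have := abs_sub_abs_le_abs_sub z α
        rw [abs_sub_comm] at this
        linarith
      rw [hz, abs_div, abs_of_pos hy₁0, div_le_iff₀ hy₁0] at h3
      exact h3
    · rw [abs_of_pos hy₁0]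
      have := abs_nonneg α
      nlinarith
  have hx₂ : (x₂ : ℝ) = w * y₂ := by rw [hw]; field_simp
  by_cases heq : homEval P r x₁ y₁ * y₂ = x₂ * homEval Q r x₁ y₁
  · right
    have hQne : homEval Q r x₁ y₁ ≠ 0 := by
      intro h0
      rw [h0, Int.cast_zero, zero_eq_mul] at hQz
      rcases hQz with h3 | h3
      · exact (pow_pos hy₁0 r).ne' h3
      · rw [h3, abs_zero] at hQ1
        linarith
    rcases eq_or_lt_of_le hr1 with hr | hr
    · rw [← hr] at hP hQ heq hQne
      exact exists_moebius hβirr hP hQ hPQ hQα hy₂ hQne heq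
    -- For `r ≥ 2`, `x₁ / y₁` would approximate `α` better than Liouville's inequality allows.
    exfalso
    have heqR : aeval z P - β * aeval z Q = (w - β) * aeval z Q := by
      have h3 : (homEval P r x₁ y₁ : ℝ) * y₂ = x₂ * homEval Q r x₁ y₁ := by exact_mod_cast heq
      rw [hPz, hQz, hx₂] at h3
      have h4 : aeval z P = w * aeval z Q := by
        apply mul_left_cancel₀ (mul_pos (pow_pos hy₁0 r) hy₂0).ne'
        linear_combination h3
      rw [h4]; ring
    have hy₂low : e * (y₁ : ℝ) ^ 2 ≤ y₂ := by
      have h3 := hden x₁ y₁ x₂ y₂ hy₁ hy₂ hc₁ hc₂ heq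
      rw [hQz, abs_mul, abs_of_pos (pow_pos hy₁0 r)] at h3
      have h4 : (y₁ : ℝ) ^ 2 * q ≤ (y₁ : ℝ) ^ r * |aeval z Q| := by
        have := pow_le_pow_right₀ hy₁' hr
        gcongr
      rw [he, div_mul_eq_mul_div, div_le_iff₀ hM]
      linarith
    have hpow : e ^ μ * (y₁ * (y₁ : ℝ) ^ d) ≤ h ^ μ := by
      calc e ^ μ * (y₁ * (y₁ : ℝ) ^ d)
          = e ^ μ * (y₁ : ℝ) ^ ((1 : ℝ) + d) := by
            rw [Real.rpow_add hy₁0, Real.rpow_one, Real.rpow_natCast]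
        _ ≤ e ^ μ * (y₁ : ℝ) ^ (2 * μ) := by
            gcongr
            linarith
        _ = (e * (y₁ : ℝ) ^ 2) ^ μ := by
            rw [Real.mul_rpow he0.le (by positivity), Real.rpow_mul hy₁0.le, Real.rpow_two]
        _ ≤ h ^ μ := by
            gcongr
            exact hy₂low.trans hyh
    have hup : c * |α - z| ≤ 3 * q * C₀ / h ^ μ := by
      rw [heqR, abs_mul, abs_sub_comm w β] at hG1
      calc c * |α - z| ≤ |β - w| * |aeval z Q| := hG1
        _ ≤ C₀ / h ^ μ * (3 * q) := by gcongr
        _ = 3 * q * C₀ / h ^ μ := by ring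
    have hl := hliou x₁ y₁ hy₁
    rw [← hz] at hl
    have hy₁Y : (y₁ : ℝ) ≤ Y := by
      rw [hY, le_div_iff₀ (by positivity)]
      rw [le_div_iff₀ (by positivity)] at hup
      have hyd : 0 < (y₁ : ℝ) ^ d := by positivity
      have h5 : c * |α - z| * (e ^ μ * (y₁ * (y₁ : ℝ) ^ d)) ≤ 3 * q * C₀ :=
        (mul_le_mul_of_nonneg_left hpow (by positivity)).trans hup
      calc (y₁ : ℝ) * (c * e ^ μ) ≤ y₁ * (c * e ^ μ) * ((y₁ : ℝ) ^ d * (|α - z| * Λ)) :=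
            le_mul_of_one_le_right (by positivity) hl
        _ = c * |α - z| * (e ^ μ * (y₁ * (y₁ : ℝ) ^ d)) * Λ := by ring
        _ ≤ 3 * q * C₀ * Λ := by gcongr
    have : (|α| + 1) * (y₁ : ℝ) ≤ (|α| + 1) * Y := by gcongr
    linarith
  · left
    have hone : (1 : ℝ) ≤ |(homEval P r x₁ y₁ : ℝ) * y₂ - x₂ * homEval Q r x₁ y₁| := by
      exact_mod_cast Int.one_le_abs (sub_ne_zero.2 heq)
    have hval : (homEval P r x₁ y₁ : ℝ) * y₂ - x₂ * homEval Q r x₁ y₁ =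
        (y₁ : ℝ) ^ r * y₂ * ((aeval z P - β * aeval z Q) + (β - w) * aeval z Q) := by
      rw [hPz, hQz, hx₂]; ring
    have hβw : |β - w| ≤ C₀ / H ^ μ :=
      h₂.le.trans (by gcongr)
    have hsum : |(aeval z P - β * aeval z Q) + (β - w) * aeval z Q| ≤ E / H ^ μ := by
      calc _ ≤ |aeval z P - β * aeval z Q| + |β - w| * |aeval z Q| := by
            rw [← abs_mul]; exact abs_add_le _ _
        _ ≤ 3 * c * (C₀ / H ^ μ) + C₀ / H ^ μ * (3 * q) := by
            gcongr
            exact hG2.trans (by gcongr)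
        _ = E / H ^ μ := by rw [hE]; ring
    have hyr : (y₁ : ℝ) ^ r ≤ H ^ ((d : ℝ) / 2) := by
      have hrd' : (r : ℝ) ≤ (d : ℝ) / 2 := by
        have : (2 : ℝ) * r ≤ d := by exact_mod_cast hrd
        linarith
      calc (y₁ : ℝ) ^ r ≤ H ^ r := by gcongr
        _ = H ^ (r : ℝ) := (Real.rpow_natCast _ _).symm
        _ ≤ H ^ ((d : ℝ) / 2) := Real.rpow_le_rpow_of_exponent_le hH1 hrd'
    have hmain : 1 ≤ H ^ ((d : ℝ) / 2) * h * (E / H ^ μ) := by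
      rw [hval, abs_mul, abs_of_pos (by positivity)] at hone
      exact hone.trans (by gcongr)
    have hsplit : H ^ μ = H ^ (μ - (d : ℝ) / 2) * H ^ ((d : ℝ) / 2) := by
      rw [← Real.rpow_add hH0]; ring_nf
    have hfin : H ^ (μ - (d : ℝ) / 2) ≤ E * h := by
      have hHd : 0 < H ^ ((d : ℝ) / 2) := by positivity
      rw [← mul_div_assoc, le_div_iff₀ (by positivity), hsplit] at hmain
      refine le_of_mul_le_mul_right ?_ hHd
      linarith
    rw [inv_mul_lt_iff₀ (by positivity)]
    have : 0 < E * h := by positivity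
    linarith
end

section
/- (p-adic Liouville theorem) Let p be a rational prime and let α ∈ ℚ_p be a p-adic algebraic number of degree d over ℚ. Then there exists a positive real number C₇, depending only on α, such that for all integers x and y with x ≠ yα, the inequality |yα − x|_p ≥ C₇ / H(x,y)^d holds. -/
/-!
Clear denominators in the minimal polynomial of `α` to get integers `a 0, …, a d` and form the
binary form `F(x, y) = ∑ a i * x ^ i * y ^ (d - i)`, which vanishes at `(y α, y)`.

* `F(x, y)` is a nonzero integer whenever `x ≠ y α`: otherwise `x / y` would be a rational root of
  the irreducible minimal polynomial, forcing `α = x / y` (`form_ne_zero`). Hence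
  `|F(x, y)|_p ≥ 1 / |F(x, y)| ≥ 1 / (A * H ^ d)`, where `A = ∑ |a i|`.
* `F(x, y) = F(x, y) - F(y α, y)` is a combination of the differences `x ^ i - (y α) ^ i`, each
  divisible by `x - y α` with bounded quotient (`norm_pow_sub_pow_le`), so
  `|F(x, y)|_p ≤ B * |x - y α|_p`.

Comparing the two bounds gives the theorem with `C₇ = 1 / ((A + 1) * B)`.
-/

open Polynomial Finset

/-- The product formula in its simplest form: `|n|_p * |n| ≥ 1` for a nonzero integer `n`. -/
theorem one_le_abs_mul_padic_norm (p : ℕ) [hp : Fact p.Prime] (n : ℤ) (hn : n ≠ 0) :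
    1 ≤ |(n : ℝ)| * ‖(n : ℚ_[p])‖ := by
  have hn' : (n : ℚ_[p]) ≠ 0 := by exact_mod_cast hn
  have hp0 : (0 : ℝ) < p := by exact_mod_cast hp.out.pos
  have hnorm : ‖(n : ℚ_[p])‖ = (p : ℝ) ^ (-((padicValInt p n : ℕ) : ℤ)) := by
    rw [Padic.norm_eq_zpow_neg_valuation hn', Padic.valuation_intCast]
  have hdvd : ((p ^ padicValInt p n : ℕ) : ℤ) ∣ n := by
    have := (Padic.norm_int_le_pow_iff_dvd (p := p) n (padicValInt p n)).1 hnorm.le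
    exact_mod_cast this
  have hle : ((p ^ padicValInt p n : ℕ) : ℤ) ≤ |n| :=
    Int.le_of_dvd (abs_pos.2 hn) ((dvd_abs _ _).2 hdvd)
  have hle' : (p : ℝ) ^ padicValInt p n ≤ |(n : ℝ)| := by exact_mod_cast hle
  rw [hnorm, zpow_neg, zpow_natCast, ← div_eq_mul_inv, one_le_div (by positivity)]
  exact hle'

theorem norm_pow_sub_pow_le {p : ℕ} [Fact p.Prime] {u v : ℚ_[p]} {M : ℝ} (hM : 1 ≤ M)
    (hu : ‖u‖ ≤ M) (hv : ‖v‖ ≤ M) (i : ℕ) : ‖u ^ i - v ^ i‖ ≤ M ^ i * ‖u - v‖ := by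
  have hM0 : 0 ≤ M := by linarith
  induction i with
  | zero => simp
  | succ i ih =>
    have h : u ^ (i + 1) - v ^ (i + 1) = u * (u ^ i - v ^ i) + (u - v) * v ^ i := by ring
    rw [h]
    refine (Padic.nonarchimedean _ _).trans (max_le ?_ ?_)
    · rw [norm_mul, pow_succ', mul_assoc]
      exact mul_le_mul hu ih (norm_nonneg _) hM0
    · rw [norm_mul, norm_pow, mul_comm]
      gcongr
      exact (pow_le_pow_left₀ (norm_nonneg _) hv i).trans (pow_le_pow_right₀ hM (Nat.le_succ i))

/-- The degree-`d` homogenization of `∑ a i * t ^ i`, evaluated at `(y t, y)`. -/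
theorem sum_homogenize {K : Type*} [Field K] (a : ℕ → K) (d : ℕ) (t y : K) :
    ∑ i ∈ range (d + 1), a i * (y * t) ^ i * y ^ (d - i)
      = y ^ d * ∑ i ∈ range (d + 1), a i * t ^ i := by
  rw [mul_sum]
  refine sum_congr rfl fun i hi => ?_
  have hi : i ≤ d := by simpa [Nat.lt_succ_iff] using hi
  rw [mul_pow, ← Nat.add_sub_of_le hi, pow_add]
  simp only [Nat.add_sub_cancel_left]
  ring

/-- The homogenized minimal polynomial of `α`, scaled by `b ≠ 0` to have integer coefficients `a`,
does not vanish at an integral point `(x, y)` with `x ≠ y α`. -/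
theorem form_ne_zero {K : Type*} [Field K] [CharZero K] {α : K}
    (hα : IsAlgebraic ℚ α) {a : ℕ → ℤ} {b : ℚ} (hb : b ≠ 0)
    (ha : ∀ i, (a i : ℚ) = b * (minpoly ℚ α).coeff i) {x y : ℤ} (hxy : (x : K) ≠ y * α) :
    ∑ i ∈ range ((minpoly ℚ α).natDegree + 1), a i * x ^ i * y ^ ((minpoly ℚ α).natDegree - i)
      ≠ 0 := by
  intro h0
  have hint : IsIntegral ℚ α := hα.isIntegral
  have hmonic := minpoly.monic hint
  set d := (minpoly ℚ α).natDegree with hd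
  have hq : ∑ i ∈ range (d + 1), (a i : ℚ) * (x : ℚ) ^ i * (y : ℚ) ^ (d - i) = 0 := by
    exact_mod_cast h0
  by_cases hy : y = 0
  · -- Only the leading term survives at `y = 0`.
    subst hy
    rw [sum_range_succ, sum_eq_zero] at hq
    · have had : (a d : ℚ) ≠ 0 := by
        rw [ha, hd, hmonic.coeff_natDegree]; simpa using hb
      have hx : (x : ℚ) ^ d = 0 := by simpa [had] using hq
      have hx0 : x = 0 := by exact_mod_cast eq_zero_of_pow_eq_zero hx
      apply hxy
      simp [hx0]
    · intro i hi
      have : d - i ≠ 0 := by have := mem_range.1 hi; omega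
      simp [this]
  · have hyq : (y : ℚ) ≠ 0 := by exact_mod_cast hy
    have hyK : (y : K) ≠ 0 := by exact_mod_cast hy
    have hroot : (minpoly ℚ α).eval ((x : ℚ) / y) = 0 := by
      have hh := sum_homogenize (fun i => (a i : ℚ)) d ((x : ℚ) / y) y
      rw [mul_div_cancel₀ _ hyq, hq] at hh
      have h2 := (mul_eq_zero.1 hh.symm).resolve_left (pow_ne_zero _ hyq)
      simp only [ha, mul_assoc] at h2
      rw [← mul_sum] at h2
      rw [eval_eq_sum_range]
      exact (mul_eq_zero.1 h2).resolve_left hb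
    have hmin : minpoly ℚ α = X - C ((x : ℚ) / y) := by
      rw [minpoly.eq_of_irreducible_of_monic (minpoly.irreducible hint)
        (x := (x : ℚ) / y) (by simpa [aeval_def, eval₂_eq_eval_map] using hroot) hmonic]
      exact minpoly.eq_X_sub_C' _
    have hev := minpoly.aeval ℚ α
    rw [hmin] at hev
    have hαe : α = (x : K) / y := by simpa [sub_eq_zero] using hev
    apply hxy
    rw [hαe, mul_div_cancel₀ _ hyK]

/-- **p-adic Liouville theorem.** Let `p` be a rational prime and let `α ∈ ℚ_p` be a
`p`-adic algebraic number of degree `d` over `ℚ`. Then there exists a positive real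
number `C₇`, depending only on `α`, such that for all integers `x` and `y` with
`x ≠ y·α`, the inequality `‖y·α − x‖_p ≥ C₇ / H(x,y)^d` holds, where
`H(x,y) = max (|x|, |y|)`. -/
theorem padic_liouville (p : ℕ) [Fact p.Prime] (α : ℚ_[p])
    (hα : IsAlgebraic ℚ α) (d : ℕ) (hdeg : (minpoly ℚ α).natDegree = d) :
    ∃ C₇ : ℝ, 0 < C₇ ∧
      ∀ x y : ℤ, (x : ℚ_[p]) ≠ (y : ℚ_[p]) * α →
        C₇ / (max |(x : ℝ)| |(y : ℝ)|) ^ d ≤ ‖(y : ℚ_[p]) * α - (x : ℚ_[p])‖ := by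
  obtain ⟨b, hb0, a, ha⟩ : ∃ b : ℚ, b ≠ 0 ∧ ∃ a : ℕ → ℤ,
      ∀ i, (a i : ℚ) = b * (minpoly ℚ α).coeff i := by
    obtain ⟨b, hbM, hb⟩ := IsLocalization.integerNormalization_spec (nonZeroDivisors ℤ)
      (minpoly ℚ α)
    refine ⟨(b : ℚ), by exact_mod_cast nonZeroDivisors.ne_zero hbM,
      (IsLocalization.integerNormalization (nonZeroDivisors ℤ) (minpoly ℚ α)).coeff, fun i => ?_⟩
    have := congrArg (fun f => f.coeff i) hb
    simpa [coeff_map] using this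
  set M : ℝ := max 1 ‖α‖ with hMdef
  have hM : 1 ≤ M := le_max_left _ _
  have hM0 : 0 ≤ M := by linarith
  set A : ℝ := ∑ i ∈ range (d + 1), |(a i : ℝ)| with hA
  have hA0 : 0 ≤ A := sum_nonneg fun _ _ => abs_nonneg _
  set B : ℝ := (d + 1) * M ^ d with hB
  have hB0 : 0 < B := by positivity
  refine ⟨1 / ((A + 1) * B), by positivity, fun x y hxy => ?_⟩
  set H : ℝ := max |(x : ℝ)| |(y : ℝ)| with hH
  set F : ℤ := ∑ i ∈ range (d + 1), a i * x ^ i * y ^ (d - i) with hF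
  have hF0 : F ≠ 0 := by
    have := form_ne_zero hα hb0 ha hxy
    rwa [hdeg] at this
  have hH0 : 0 < H := by
    by_contra hcon
    have hx : |(x : ℝ)| ≤ 0 := (le_max_left _ _).trans (not_lt.1 hcon)
    have hy : |(y : ℝ)| ≤ 0 := (le_max_right _ _).trans (not_lt.1 hcon)
    have hx0 : x = 0 := by exact_mod_cast abs_nonpos_iff.1 hx
    have hy0 : y = 0 := by exact_mod_cast abs_nonpos_iff.1 hy
    apply hxy
    simp [hx0, hy0]
  have hupper : |(F : ℝ)| ≤ A * H ^ d := by
    rw [hF, hA, sum_mul]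
    push_cast
    refine (abs_sum_le_sum_abs _ _).trans (sum_le_sum fun i hi => ?_)
    have hi : i ≤ d := by simpa [Nat.lt_succ_iff] using hi
    rw [abs_mul, abs_mul, abs_pow, abs_pow, mul_assoc]
    have : H ^ d = H ^ i * H ^ (d - i) := by rw [← pow_add, Nat.add_sub_of_le hi]
    rw [this]
    gcongr
    · exact le_max_left _ _
    · exact le_max_right _ _
  have hzero : ∑ i ∈ range (d + 1), (a i : ℚ_[p]) * (y * α) ^ i * (y : ℚ_[p]) ^ (d - i) = 0 := by
    rw [sum_homogenize (fun i => (a i : ℚ_[p]))]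
    have hcast : ∀ i, (a i : ℚ_[p]) = (b : ℚ_[p]) * ((minpoly ℚ α).coeff i : ℚ) := fun i => by
      exact_mod_cast congrArg (fun q : ℚ => (q : ℚ_[p])) (ha i)
    have hev := minpoly.aeval ℚ α
    rw [aeval_eq_sum_range, hdeg] at hev
    simp only [hcast, mul_assoc]
    rw [← mul_sum]
    simp only [Algebra.smul_def, eq_ratCast] at hev
    rw [hev, mul_zero, mul_zero]
  have hlower : ‖(F : ℚ_[p])‖ ≤ B * ‖(y : ℚ_[p]) * α - x‖ := by
    have hdiff : (F : ℚ_[p]) = ∑ i ∈ range (d + 1),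
        (a i : ℚ_[p]) * ((x : ℚ_[p]) ^ i - (y * α) ^ i) * (y : ℚ_[p]) ^ (d - i) := by
      rw [← sub_zero (F : ℚ_[p]), ← hzero, hF]
      push_cast
      rw [← sum_sub_distrib]
      exact sum_congr rfl fun i _ => by ring
    have hterm : ∀ i ∈ range (d + 1),
        ‖(a i : ℚ_[p]) * ((x : ℚ_[p]) ^ i - (y * α) ^ i) * (y : ℚ_[p]) ^ (d - i)‖
          ≤ M ^ d * ‖(y : ℚ_[p]) * α - x‖ := by
      intro i hi
      have hi : i ≤ d := by simpa [Nat.lt_succ_iff] using hi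
      have hy1 : ‖(y : ℚ_[p])‖ ≤ 1 := Padic.norm_int_le_one y
      have hyα : ‖(y : ℚ_[p]) * α‖ ≤ M := by
        rw [norm_mul]
        exact (mul_le_of_le_one_left (norm_nonneg _) hy1).trans (le_max_right _ _)
      have hpow := norm_pow_sub_pow_le hM ((Padic.norm_int_le_one x).trans hM) hyα i
      rw [norm_sub_rev (x : ℚ_[p]) (y * α)] at hpow
      rw [norm_mul, norm_mul, norm_pow]
      calc _ ≤ 1 * ‖(x : ℚ_[p]) ^ i - (y * α) ^ i‖ * 1 := by
            gcongr
            · exact Padic.norm_int_le_one (a i)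
            · exact pow_le_one₀ (norm_nonneg _) hy1
        _ ≤ M ^ i * ‖(y : ℚ_[p]) * α - x‖ := by simpa using hpow
        _ ≤ _ := by gcongr
    rw [hdiff]
    refine (norm_sum_le_of_le _ hterm).trans (le_of_eq ?_)
    simp [hB, mul_assoc]
  have hprod := one_le_abs_mul_padic_norm p F hF0
  rw [div_div, div_le_iff₀ (by positivity)]
  calc (1 : ℝ) ≤ |(F : ℝ)| * ‖(F : ℚ_[p])‖ := hprod
    _ ≤ ((A + 1) * H ^ d) * (B * ‖(y : ℚ_[p]) * α - x‖) := by
        gcongr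
        exact hupper.trans (by gcongr; linarith)
    _ = _ := by ring
end

section
/- Let α be an algebraic number of degree d over ℚ and let β ∈ ℚ(α) be irrational. Then there exist polynomials P, Q ∈ ℤ[x], not both identically zero, with P(α) + β·Q(α) = 0 and max(deg P, deg Q) ≤ ⌊d/2⌋; moreover, if P, Q is a minimal pair for (α, β), then 1 ≤ r(α,β) ≤ ⌊d/2⌋. -/
/-!
The pairs `(p, q)` of rational polynomials of degree at most `d / 2` form a `ℚ`-vector space of
dimension `2 * (d / 2 + 1) > d`, and `(p, q) ↦ p(α) + β q(α)` maps it linearly into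
`ℚ[α]`, which has dimension `d`. Hence this map has a nonzero kernel element, and clearing
denominators (`exists_int_polynomial_map_eq_C_mul`) gives the integer pair; minimality transfers
the degree bound to every minimal pair. A pair of constants in the kernel would make
`β` a quotient of integers, so the degree is at least `1`.
-/

open Polynomial

/-- The height `H(P)` of an integer polynomial: the maximum of the absolute values of
its coefficients (as a natural number; `H(0) = 0`). -/
def polyHeight (P : Polynomial ℤ) : ℕ := P.support.sup fun i => (P.coeff i).natAbs

/-- `P, Q ∈ ℤ[x]`, not both identically zero, form a *minimal pair* for `(α, β)` if
(1) `P, Q ∈ ℤ[x]`; (2) `P(α) + β·Q(α) = 0`; (3) `max (deg P, deg Q)` is minimal among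
all pairs satisfying (1) and (2); (4) `max (H(P), H(Q))` is minimal among all pairs
satisfying (1), (2) and (3). -/
def IsMinimalPair {R : Type*} [CommRing R] (α β : R) (P Q : Polynomial ℤ) : Prop :=
  (¬(P = 0 ∧ Q = 0)) ∧
  (Polynomial.aeval α P + β * Polynomial.aeval α Q = 0) ∧
  (∀ P' Q' : Polynomial ℤ, ¬(P' = 0 ∧ Q' = 0) →
    Polynomial.aeval α P' + β * Polynomial.aeval α Q' = 0 →
    max P.natDegree Q.natDegree ≤ max P'.natDegree Q'.natDegree) ∧
  (∀ P' Q' : Polynomial ℤ, ¬(P' = 0 ∧ Q' = 0) →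
    Polynomial.aeval α P' + β * Polynomial.aeval α Q' = 0 →
    max P'.natDegree Q'.natDegree = max P.natDegree Q.natDegree →
    max (polyHeight P) (polyHeight Q) ≤ max (polyHeight P') (polyHeight Q'))

/-- Clearing denominators in one rational polynomial. -/
lemma exists_int_polynomial_map_eq_C_mul (p : ℚ[X]) :
    ∃ (N : ℤ) (P : ℤ[X]), N ≠ 0 ∧ P.map (algebraMap ℤ ℚ) = C (N : ℚ) * p := by
  obtain ⟨b, hb, h⟩ := IsLocalization.integerNormalization_spec (nonZeroDivisors ℤ) p
  refine ⟨b, IsLocalization.integerNormalization (nonZeroDivisors ℤ) p,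
    nonZeroDivisors.ne_zero hb, ?_⟩
  rw [h, ← Polynomial.smul_eq_C_mul, Int.cast_smul_eq_zsmul]

/-- The dimension count: `2 * (d / 2 + 1) > d` forces a nontrivial kernel. -/
lemma exists_rat_pair (α : ℂ) (hα : IsAlgebraic ℚ α)
    (β : ℂ) (hβ : β ∈ Algebra.adjoin ℚ {α}) :
    ∃ p q : ℚ[X], ¬(p = 0 ∧ q = 0) ∧ aeval α p + β * aeval α q = 0 ∧
      p.natDegree ≤ (minpoly ℚ α).natDegree / 2 ∧ q.natDegree ≤ (minpoly ℚ α).natDegree / 2 := by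
  set n := (minpoly ℚ α).natDegree / 2 + 1 with hn
  let S := Algebra.adjoin ℚ {α}
  have haS : ∀ p : ℚ[X], aeval α p ∈ S := fun p => aeval_mem_adjoin_singleton ℚ α
  let pb := Algebra.adjoin.powerBasis hα.isIntegral
  have hS : Module.finrank ℚ S = (minpoly ℚ α).natDegree := by
    rw [pb.finrank, Algebra.adjoin.powerBasis_dim]
  have : Module.Finite ℚ S := pb.finite
  have : Module.Finite ℚ (degreeLT ℚ n) := Module.Finite.equiv (degreeLTEquiv ℚ n).symm
  have hD : Module.finrank ℚ (degreeLT ℚ n) = n := by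
    rw [(degreeLTEquiv ℚ n).finrank_eq, Module.finrank_fin_fun]
  let e : degreeLT ℚ n →ₗ[ℚ] ℂ := (aeval α).toLinearMap ∘ₗ (degreeLT ℚ n).subtype
  let g : (degreeLT ℚ n × degreeLT ℚ n) →ₗ[ℚ] ℂ :=
    e.coprod ((LinearMap.mulLeft ℚ β) ∘ₗ e)
  let f : (degreeLT ℚ n × degreeLT ℚ n) →ₗ[ℚ] S :=
    g.codRestrict (Subalgebra.toSubmodule S) fun x =>
      S.add_mem (haS _) (S.mul_mem hβ (haS _))
  have hk : LinearMap.ker f ≠ ⊥ := by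
    apply LinearMap.ker_ne_bot_of_finrank_lt
    rw [Module.finrank_prod, hD, hS]
    omega
  obtain ⟨⟨p, q⟩, hx, hne⟩ := Submodule.exists_mem_ne_zero_of_ne_bot hk
  have hdeg : ∀ p : degreeLT ℚ n, (p : ℚ[X]).natDegree ≤ (minpoly ℚ α).natDegree / 2 := by
    intro p
    have h := mem_degreeLT.1 p.2
    by_cases hp : (p : ℚ[X]) = 0
    · simp [hp]
    · exact Nat.lt_succ_iff.1 ((natDegree_lt_iff_degree_lt hp).2 h)
  refine ⟨p, q, ?_, ?_, hdeg p, hdeg q⟩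
  · rintro ⟨h1, h2⟩
    exact hne (Prod.ext (Subtype.ext h1) (Subtype.ext h2))
  · exact congrArg Subtype.val (LinearMap.mem_ker.1 hx)

lemma exists_int_pair (α : ℂ) (hα : IsAlgebraic ℚ α)
    (β : ℂ) (hβ : β ∈ Algebra.adjoin ℚ {α}) :
    ∃ P Q : ℤ[X], ¬(P = 0 ∧ Q = 0) ∧ aeval α P + β * aeval α Q = 0 ∧
      max P.natDegree Q.natDegree ≤ (minpoly ℚ α).natDegree / 2 := by
  obtain ⟨p, q, hne, h0, hp, hq⟩ := exists_rat_pair α hα β hβ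
  obtain ⟨M, P, hM, hP⟩ := exists_int_polynomial_map_eq_C_mul p
  obtain ⟨N, Q, hN, hQ⟩ := exists_int_polynomial_map_eq_C_mul q
  have hinj : Function.Injective (algebraMap ℤ ℚ) := (algebraMap ℤ ℚ).injective_int
  have key : ∀ (K L : ℤ) (F : ℤ[X]) (f : ℚ[X]), K ≠ 0 → L ≠ 0 →
      F.map (algebraMap ℤ ℚ) = C (K : ℚ) * f →
      aeval α (C L * F) = (L : ℂ) * K * aeval α f ∧ (C L * F).natDegree = f.natDegree ∧
        (C L * F = 0 → f = 0) := by
    intro K L F f hK hL hF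
    have hK' : (K : ℚ) ≠ 0 := Int.cast_ne_zero.2 hK
    refine ⟨?_, ?_, ?_⟩
    · rw [map_mul, ← aeval_map_algebraMap ℚ α F, hF]
      simp [mul_assoc]
    · rw [natDegree_C_mul hL, ← natDegree_map_eq_of_injective hinj, hF, natDegree_C_mul hK']
    · intro h
      have hF0 : F = 0 := by simpa [hL] using h
      simpa [hF0, hK] using hF.symm
  -- Multiplying crosswise gives both polynomials the common factor `M * N`.
  obtain ⟨a1, a2, a3⟩ := key M N P p hM hN hP
  obtain ⟨b1, b2, b3⟩ := key N M Q q hN hM hQ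
  refine ⟨C N * P, C M * Q, fun h => hne ⟨a3 h.1, b3 h.2⟩, ?_, ?_⟩
  · rw [a1, b1]
    linear_combination (N : ℂ) * M * h0
  · rw [a2, b2]
    exact max_le hp hq

/-- Let `α` be an algebraic number of degree `d` over `ℚ` and let `β ∈ ℚ(α)` be
irrational. Then there exist `P, Q ∈ ℤ[x]`, not both identically zero, with
`P(α) + β·Q(α) = 0` and `max (deg P, deg Q) ≤ ⌊d/2⌋`; moreover, if `P, Q` is a
minimal pair for `(α, β)`, then `1 ≤ r(α,β) ≤ ⌊d/2⌋`, where
`r(α,β) = max (deg P, deg Q)`. -/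
theorem minimal_pair_exists_and_degree_bound
    (α : ℂ) (hα : IsAlgebraic ℚ α) (d : ℕ) (hdeg : (minpoly ℚ α).natDegree = d)
    (β : ℂ) (hβmem : β ∈ Algebra.adjoin ℚ {α}) (hβirr : ∀ q : ℚ, (q : ℂ) ≠ β) :
    (∃ P Q : Polynomial ℤ, ¬(P = 0 ∧ Q = 0) ∧
      Polynomial.aeval α P + β * Polynomial.aeval α Q = 0 ∧
      max P.natDegree Q.natDegree ≤ d / 2) ∧
    ∀ P Q : Polynomial ℤ, IsMinimalPair α β P Q →
      1 ≤ max P.natDegree Q.natDegree ∧ max P.natDegree Q.natDegree ≤ d / 2 := by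
  subst hdeg
  have hex := exists_int_pair α hα β hβmem
  refine ⟨hex, fun P Q ⟨hne, h0, hmin, _⟩ => ⟨?_, ?_⟩⟩
  · by_contra! hlt
    have hP := eq_C_of_natDegree_eq_zero (p := P) (by omega)
    have hQ := eq_C_of_natDegree_eq_zero (p := Q) (by omega)
    rw [hP, hQ] at h0 hne
    generalize P.coeff 0 = a at h0 hne
    generalize Q.coeff 0 = b at h0 hne
    simp only [eq_intCast, map_intCast] at h0
    by_cases hb : b = 0
    · subst hb
      simp at h0 hne
      exact hne h0
    · have hb' : (b : ℂ) ≠ 0 := Int.cast_ne_zero.2 hb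
      apply hβirr (-a / b)
      push_cast
      rw [div_eq_iff hb']
      linear_combination -h0
  · obtain ⟨P', Q', hne', h0', hd⟩ := hex
    exact (hmin P' Q' hne' h0').trans hd
end

section
/- Let α be an algebraic number of degree d over ℚ, let β ∈ ℚ(α) be irrational, and let P, Q be a minimal pair for (α, β). Then P and Q are coprime in ℚ[x]. -/
/-!
Clearing denominators, `P, Q` have minimal `max (deg P, deg Q)` even among rational pairs `p, q`
with `p(α) + β q(α) = 0` (`IsMinimalPair.max_natDegree_le`). Writing `β = R(α)` with `R` reduced
modulo the minimal polynomial of `α` gives the pair `(R, -1)`, so `max (deg P, deg Q)` is smaller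
than the degree of `α`. Hence a common irreducible factor `z` of `P` and `Q` over `ℚ` does not
vanish at `α`, and dividing both polynomials by `z` yields a pair of smaller degree, a
contradiction.
-/

open Polynomial

/-- Two rational polynomials have a common nonzero integer denominator. -/
lemma exists_common_int_multiple (p q : ℚ[X]) :
    ∃ (b : ℤ) (P Q : ℤ[X]), b ≠ 0 ∧
      P.map (Int.castRingHom ℚ) = C (b : ℚ) * p ∧ Q.map (Int.castRingHom ℚ) = C (b : ℚ) * q := by
  have key : ∀ r : ℚ[X], ∃ (c : ℤ) (R : ℤ[X]), c ≠ 0 ∧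
      R.map (Int.castRingHom ℚ) = C (c : ℚ) * r := by
    intro r
    obtain ⟨c, hc, h⟩ := IsLocalization.integerNormalization_spec (nonZeroDivisors ℤ) r
    refine ⟨c, _, nonZeroDivisors.ne_zero hc, h.trans ?_⟩
    ext i
    simp
  obtain ⟨a, P, ha, hP⟩ := key p
  obtain ⟨b, Q, hb, hQ⟩ := key q
  refine ⟨a * b, C b * P, C a * Q, mul_ne_zero ha hb, ?_, ?_⟩
  · rw [Polynomial.map_mul, hP, map_C, eq_intCast, Int.cast_mul, C_mul]
    ring
  · rw [Polynomial.map_mul, hQ, map_C, eq_intCast, Int.cast_mul, C_mul]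
    ring

/-- The degree minimality of a minimal pair extends to competitors with rational coefficients. -/
lemma IsMinimalPair.max_natDegree_le {α β : ℂ} {P Q : ℤ[X]} (h : IsMinimalPair α β P Q)
    (p q : ℚ[X]) (hne : ¬(p = 0 ∧ q = 0)) (hrel : aeval α p + β * aeval α q = 0) :
    max P.natDegree Q.natDegree ≤ max p.natDegree q.natDegree := by
  obtain ⟨b, P', Q', hb, hP, hQ⟩ := exists_common_int_multiple p q
  have hb' : (b : ℚ) ≠ 0 := Int.cast_ne_zero.mpr hb
  have hinj : Function.Injective (Int.castRingHom ℚ) := Int.cast_injective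
  have hdeg : ∀ {r : ℚ[X]} {R : ℤ[X]}, R.map (Int.castRingHom ℚ) = C (b : ℚ) * r →
      R.natDegree = r.natDegree := by
    intro r R hR
    rw [← natDegree_map_eq_of_injective hinj, hR, natDegree_C_mul hb']
  have hzero : ∀ {r : ℚ[X]} {R : ℤ[X]}, R.map (Int.castRingHom ℚ) = C (b : ℚ) * r →
      R = 0 → r = 0 := by
    rintro r R hR rfl
    simpa [hb] using hR.symm
  have heval : ∀ {r : ℚ[X]} {R : ℤ[X]}, R.map (Int.castRingHom ℚ) = C (b : ℚ) * r →
      aeval α R = (b : ℂ) * aeval α r := by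
    intro r R hR
    have := congrArg (aeval α) hR
    rw [← algebraMap_int_eq, aeval_map_algebraMap] at this
    simpa using this
  rw [← hdeg hP, ← hdeg hQ]
  refine h.2.2.1 P' Q' (fun h0 => hne ⟨hzero hP h0.1, hzero hQ h0.2⟩) ?_
  rw [heval hP, heval hQ]
  linear_combination (b : ℂ) * hrel

/-- Let `α` be an algebraic number of degree `d` over `ℚ`, let `β ∈ ℚ(α)` be
irrational, and let `P, Q` be a minimal pair for `(α, β)`. Then `P` and `Q` are
coprime in `ℚ[x]`. -/
theorem minimal_pair_coprime
    (α : ℂ) (hα : IsAlgebraic ℚ α) (d : ℕ) (hdeg : (minpoly ℚ α).natDegree = d)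
    (β : ℂ) (hβmem : β ∈ Algebra.adjoin ℚ {α}) (hβirr : ∀ q : ℚ, (q : ℂ) ≠ β)
    (P Q : Polynomial ℤ) (hmin : IsMinimalPair α β P Q) :
    IsCoprime (P.map (Int.castRingHom ℚ)) (Q.map (Int.castRingHom ℚ)) := by
  have hint : IsIntegral ℚ α := hα.isIntegral
  have hinj : Function.Injective (Int.castRingHom ℚ) := Int.cast_injective
  have hlt : max P.natDegree Q.natDegree < (minpoly ℚ α).natDegree := by
    rw [Algebra.adjoin_singleton_eq_range_aeval] at hβmem
    obtain ⟨R, hR⟩ := hβmem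
    have hR' : aeval α (R %ₘ minpoly ℚ α) = β := by
      rw [aeval_modByMonic_eq_self_of_root (minpoly.aeval ℚ α)]
      exact hR
    refine (hmin.max_natDegree_le (R %ₘ minpoly ℚ α) (-1) (by simp) (by simp [hR'])).trans_lt ?_
    refine max_lt (natDegree_modByMonic_lt _ (minpoly.monic hint) (minpoly.ne_one ℚ α)) ?_
    simpa using minpoly.natDegree_pos hint
  have hrel : aeval α (P.map (Int.castRingHom ℚ)) + β * aeval α (Q.map (Int.castRingHom ℚ)) = 0 := by
    rw [← algebraMap_int_eq, aeval_map_algebraMap, aeval_map_algebraMap]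
    exact hmin.2.1
  have hne : ¬(P.map (Int.castRingHom ℚ) = 0 ∧ Q.map (Int.castRingHom ℚ) = 0) := by
    rw [Polynomial.map_eq_zero_iff hinj, Polynomial.map_eq_zero_iff hinj]
    exact hmin.1
  have hle := hmin.max_natDegree_le
  rw [← natDegree_map_eq_of_injective hinj P, ← natDegree_map_eq_of_injective hinj Q] at hlt hle
  generalize P.map (Int.castRingHom ℚ) = p at *
  generalize Q.map (Int.castRingHom ℚ) = q at *
  refine isCoprime_of_irreducible_dvd hne ?_
  rintro z hz ⟨p', rfl⟩ ⟨q', rfl⟩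
  have hzpos : 0 < z.natDegree := hz.natDegree_pos
  have hmul : ∀ r : ℚ[X], r ≠ 0 → (z * r).natDegree = z.natDegree + r.natDegree :=
    fun r hr => natDegree_mul hz.ne_zero hr
  have hne' : ¬(p' = 0 ∧ q' = 0) := by
    rintro ⟨rfl, rfl⟩
    simp at hne
  -- At least one of `p', q'` is nonzero, so the maximal degree drops by at least `deg z`.
  have hmax : z.natDegree + max p'.natDegree q'.natDegree ≤
      max (z * p').natDegree (z * q').natDegree := by
    by_cases hp : p' = 0
    · have hq : q' ≠ 0 := fun hq => hne' ⟨hp, hq⟩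
      simp [hp, hmul q' hq]
    · by_cases hq : q' = 0
      · simp [hq, hmul p' hp]
      · rw [hmul p' hp, hmul q' hq]
        omega
  have hzα : aeval α z ≠ 0 := by
    intro h0
    have := natDegree_le_of_dvd (minpoly.dvd ℚ α h0) hz.ne_zero
    omega
  have hrel' : aeval α p' + β * aeval α q' = 0 := by
    apply mul_left_cancel₀ hzα
    simp only [map_mul] at hrel
    linear_combination hrel
  have := hle p' q' hne' hrel'
  omega
end

section
/- Let α be an algebraic number of degree d over ℚ, let β ∈ ℚ(α) be irrational, let P, Q be a minimal pair for (α, β) and set r = r(α,β). If P̂, Q̂ ∈ ℤ[x] satisfy P̂(α) + β·Q̂(α) = 0 and max(deg P̂, deg Q̂) ≤ d − 1 − r, then there exists G ∈ ℤ[x] with P̂ = G·P and Q̂ = G·Q. -/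
/-!
Since `P(α) = -β Q(α)` and `P̂(α) = -β Q̂(α)`, the integer polynomial `P Q̂ - P̂ Q` vanishes at `α`.
Its degree is at most `r + (d - 1 - r) < d`, so it is zero (`eq_zero_of_aeval_eq_zero`) and
`P Q̂ = P̂ Q`. A minimal pair with `r < d` has no common factor in `ℤ[x]` other than units
(`IsMinimalPair.isRelPrime`): dividing out a common factor of positive degree would lower the
degree, and dividing out an integer of absolute value at least `2` would lower the height. As `ℤ[x]`
is a unique factorization domain, `P ∣ P̂ Q` gives `P ∣ P̂`, and the quotient is the required `G`.
-/

open Polynomial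

theorem eq_zero_of_aeval_eq_zero {α : ℂ} {F : ℤ[X]}
    (hF : F.natDegree < (minpoly ℚ α).natDegree) (h : aeval α F = 0) : F = 0 := by
  by_contra hne
  have hinj : Function.Injective (algebraMap ℤ ℚ) := Int.cast_injective
  have h1 : F.map (algebraMap ℤ ℚ) ≠ 0 := (Polynomial.map_ne_zero_iff hinj).2 hne
  have h2 : aeval α (F.map (algebraMap ℤ ℚ)) = 0 := by rwa [aeval_map_algebraMap]
  have h3 := natDegree_le_natDegree (minpoly.degree_le_of_ne_zero ℚ α h1 h2)
  rw [natDegree_map_eq_of_injective hinj] at h3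
  omega

theorem polyHeight_C_mul {c : ℤ} (hc : c ≠ 0) (F : ℤ[X]) :
    polyHeight (C c * F) = c.natAbs * polyHeight F := by
  have hs : (C c * F).support = F.support := by
    ext i
    simp [hc]
  simp only [polyHeight, hs, coeff_C_mul, Int.natAbs_mul]
  exact (Finset.apply_sup_eq_sup_comp (fun n : ℕ => c.natAbs * n)
    (fun x y => Nat.mul_max_mul_left _ _ _ |>.symm) (by simp)).symm

theorem polyHeight_pos {F : ℤ[X]} (hF : F ≠ 0) : 0 < polyHeight F := by
  have h : F.natDegree ∈ F.support := natDegree_mem_support_of_nonzero hF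
  refine lt_of_lt_of_le ?_ (Finset.le_sup (f := fun i => (F.coeff i).natAbs) h)
  simpa [Int.natAbs_pos] using hF

/-- When its degree is smaller than the degree of `α` and `β ≠ 0`, both members of a minimal pair
are nonzero. -/
theorem IsMinimalPair.ne_zero {α β : ℂ} {P Q : ℤ[X]} (h : IsMinimalPair α β P Q) (hβ : β ≠ 0)
    (hr : max P.natDegree Q.natDegree < (minpoly ℚ α).natDegree) : P ≠ 0 ∧ Q ≠ 0 := by
  obtain ⟨hne, hrel, -, -⟩ := h
  rw [max_lt_iff] at hr
  constructor
  · rintro rfl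
    have hQ : aeval α Q = 0 := by simpa [hβ] using hrel
    exact hne ⟨rfl, eq_zero_of_aeval_eq_zero hr.2 hQ⟩
  · rintro rfl
    have hP : aeval α P = 0 := by simpa using hrel
    exact hne ⟨eq_zero_of_aeval_eq_zero hr.1 hP, rfl⟩

theorem IsMinimalPair.isRelPrime {α β : ℂ} {P Q : ℤ[X]} (h : IsMinimalPair α β P Q) (hβ : β ≠ 0)
    (hr : max P.natDegree Q.natDegree < (minpoly ℚ α).natDegree) : IsRelPrime P Q := by
  obtain ⟨hP, hQ⟩ := h.ne_zero hβ hr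
  obtain ⟨-, hrel, hdegmin, hheight⟩ := h
  rintro D ⟨P', rfl⟩ ⟨Q', rfl⟩
  have hD : D ≠ 0 := left_ne_zero_of_mul hP
  have hP' : P' ≠ 0 := right_ne_zero_of_mul hP
  have hQ' : Q' ≠ 0 := right_ne_zero_of_mul hQ
  have hdP := natDegree_mul hD hP'
  have hdQ := natDegree_mul hD hQ'
  have hDα : aeval α D ≠ 0 := fun h0 => hD (eq_zero_of_aeval_eq_zero (by omega) h0)
  have hrel' : aeval α P' + β * aeval α Q' = 0 := by
    refine (mul_eq_zero.1 ?_).resolve_left hDα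
    rw [← hrel, map_mul, map_mul]
    ring
  have hne' : ¬(P' = 0 ∧ Q' = 0) := fun h0 => hP' h0.1
  have hle := hdegmin P' Q' hne' hrel'
  have hD0 : D.natDegree = 0 := by omega
  obtain ⟨c, rfl⟩ := natDegree_eq_zero.1 hD0
  have hc : c ≠ 0 := by simpa using hD
  have hH := hheight P' Q' hne' hrel' (by omega)
  rw [polyHeight_C_mul hc, polyHeight_C_mul hc, Nat.mul_max_mul_left] at hH
  have hpos : 0 < max (polyHeight P') (polyHeight Q') := lt_max_of_lt_left (polyHeight_pos hP')
  have hc1 : c.natAbs ≤ 1 := by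
    by_contra! hlt
    nlinarith
  have hc2 : c.natAbs = 1 := le_antisymm hc1 (Int.natAbs_pos.2 hc)
  exact isUnit_C.2 (Int.isUnit_iff_natAbs_eq.2 hc2)

/-- Let `α` be an algebraic number of degree `d` over `ℚ`, let `β ∈ ℚ(α)` be
irrational, let `P, Q` be a minimal pair for `(α, β)` and set
`r = r(α,β) = max (deg P, deg Q)`. If `P̂, Q̂ ∈ ℤ[x]` satisfy `P̂(α) + β·Q̂(α) = 0`
and `max (deg P̂, deg Q̂) ≤ d − 1 − r`, then there exists `G ∈ ℤ[x]` with
`P̂ = G·P` and `Q̂ = G·Q`. -/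
theorem minimal_pair_divides
    (α : ℂ) (hα : IsAlgebraic ℚ α) (d : ℕ) (hdeg : (minpoly ℚ α).natDegree = d)
    (β : ℂ) (hβmem : β ∈ Algebra.adjoin ℚ {α}) (hβirr : ∀ q : ℚ, (q : ℂ) ≠ β)
    (P Q : Polynomial ℤ) (hmin : IsMinimalPair α β P Q)
    (Phat Qhat : Polynomial ℤ)
    (hhat : Polynomial.aeval α Phat + β * Polynomial.aeval α Qhat = 0)
    (hhatdeg : (max Phat.natDegree Qhat.natDegree : ℤ) ≤
      (d : ℤ) - 1 - (max P.natDegree Q.natDegree : ℤ)) :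
    ∃ G : Polynomial ℤ, Phat = G * P ∧ Qhat = G * Q := by
  have hβ : β ≠ 0 := fun h => hβirr 0 (by simp [h])
  have hr : max P.natDegree Q.natDegree < (minpoly ℚ α).natDegree := by omega
  obtain ⟨hP, -⟩ := hmin.ne_zero hβ hr
  have hcross : P * Qhat = Phat * Q := by
    refine sub_eq_zero.1 (eq_zero_of_aeval_eq_zero (α := α) ?_ ?_)
    · have h1 := natDegree_sub_le (P * Qhat) (Phat * Q)
      have h2 := natDegree_mul_le (p := P) (q := Qhat)
      have h3 := natDegree_mul_le (p := Phat) (q := Q)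
      omega
    · simp only [map_sub, map_mul]
      linear_combination aeval α Qhat * hmin.2.1 - aeval α Q * hhat
  obtain ⟨G, rfl⟩ : P ∣ Phat :=
    (hmin.isRelPrime hβ hr).dvd_of_dvd_mul_right ⟨Qhat, hcross.symm⟩
  refine ⟨G, mul_comm _ _, mul_left_cancel₀ hP ?_⟩
  rw [hcross, mul_assoc]
end

section
/- Let p be a rational prime, let α ∈ ℚ_p be a p-adic algebraic number of degree d over ℚ, let β ∈ ℚ(α) be irrational, let P, Q be a minimal pair for (α, β), and let W = P·Q′ − Q·P′ be the Wronskian of P and Q. Then there exists a positive real number C₁₄, depending only on α and β, such that |W(α)|_p ≥ C₁₄. -/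
/-!
For fixed `(α, β)` all minimal pairs share the same maximal degree and the same maximal height,
so there are only finitely many of them (`finite_setOf_isMinimalPair`), and it is enough to show
that `W(α) ≠ 0` for each one (`IsMinimalPair.wronskian_ne_zero`).

Writing `β = f(α)` with `deg f < deg α` and clearing denominators gives a pair of degree less
than `deg α`, so a minimal pair has degree less than `deg α`; hence `Q(α) ≠ 0`, since otherwise
`P` and `Q` would both vanish at `α` and so both be zero. If `W(α) = 0`, substituting
`P(α) = -β Q(α)` and cancelling `Q(α)` gives `P'(α) + β Q'(α) = 0`. Thus `(P', Q')` is a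
competing pair of strictly smaller degree, which forces `P' = Q' = 0`. Then `P` and `Q` are
constants and `β` is rational, a contradiction.
-/

open Polynomial

lemma natAbs_coeff_le_polyHeight (P : Polynomial ℤ) (i : ℕ) :
    (P.coeff i).natAbs ≤ polyHeight P := by
  by_cases h : P.coeff i = 0
  · simp [h]
  · exact Finset.le_sup (f := fun i => (P.coeff i).natAbs) (mem_support_iff.2 h)

lemma finite_setOf_natDegree_le_polyHeight_le (n h : ℕ) :
    {P : Polynomial ℤ | P.natDegree ≤ n ∧ polyHeight P ≤ h}.Finite := by
  refine Set.Finite.of_finite_image (f := fun P => fun i : Fin (n + 1) => P.coeff i) ?_ ?_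
  · refine (Set.Finite.pi' (t := fun _ : Fin (n + 1) => Set.Icc (-(h : ℤ)) h)
      fun _ => Set.finite_Icc _ _).subset ?_
    rintro _ ⟨P, ⟨-, hP⟩, rfl⟩ i
    have := natAbs_coeff_le_polyHeight P i
    simp only [Set.mem_Icc]
    omega
  · rintro P ⟨hP, -⟩ Q ⟨hQ, -⟩ hPQ
    ext i
    by_cases hi : i < n + 1
    · exact congrFun hPQ ⟨i, hi⟩
    · rw [coeff_eq_zero_of_natDegree_lt (by omega), coeff_eq_zero_of_natDegree_lt (by omega)]

lemma finite_setOf_isMinimalPair {R : Type*} [CommRing R] (α β : R) :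
    {x : Polynomial ℤ × Polynomial ℤ | IsMinimalPair α β x.1 x.2}.Finite := by
  rcases Set.eq_empty_or_nonempty
    {x : Polynomial ℤ × Polynomial ℤ | IsMinimalPair α β x.1 x.2} with he | ⟨⟨P₀, Q₀⟩, h₀⟩
  · rw [he]
    exact Set.finite_empty
  · obtain ⟨hne, hrel, hmin, -⟩ := h₀
    have hF := finite_setOf_natDegree_le_polyHeight_le (max P₀.natDegree Q₀.natDegree)
      (max (polyHeight P₀) (polyHeight Q₀))
    refine (hF.prod hF).subset ?_
    rintro ⟨P, Q⟩ ⟨hne', hrel', hmin', hht⟩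
    have h1 := hmin' P₀ Q₀ hne hrel
    have h2 := hmin P Q hne' hrel'
    have h3 := hht P₀ Q₀ hne hrel (le_antisymm h2 h1)
    exact ⟨⟨(le_max_left _ _).trans h1, (le_max_left _ _).trans h3⟩,
      ⟨(le_max_right _ _).trans h1, (le_max_right _ _).trans h3⟩⟩

section Field

variable {K : Type*} [Field K] [CharZero K]

/-- Witnessed by `(n • f, -n)`, where `β = f(α)` with `deg f < deg α` and `n` is a common
denominator of the coefficients of `f`. -/
lemma exists_pair_natDegree_lt {α β : K} (hα : IsAlgebraic ℚ α)
    (hβ : β ∈ Algebra.adjoin ℚ {α}) :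
    ∃ P Q : Polynomial ℤ, ¬(P = 0 ∧ Q = 0) ∧ aeval α P + β * aeval α Q = 0 ∧
      max P.natDegree Q.natDegree < (minpoly ℚ α).natDegree := by
  have hint := hα.isIntegral
  obtain ⟨g, rfl⟩ : ∃ g : ℚ[X], aeval α g = β := by
    rwa [Algebra.adjoin_singleton_eq_range_aeval] at hβ
  have hdeg : (g %ₘ minpoly ℚ α).natDegree < (minpoly ℚ α).natDegree :=
    natDegree_modByMonic_lt _ (minpoly.monic hint) (minpoly.ne_one ℚ α)
  have hval : aeval α (g %ₘ minpoly ℚ α) = aeval α g :=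
    aeval_modByMonic_eq_self_of_root (minpoly.aeval ℚ α)
  rw [← hval]
  generalize g %ₘ minpoly ℚ α = f at hdeg
  obtain ⟨b, hb, hbf⟩ := IsLocalization.integerNormalization_spec (nonZeroDivisors ℤ) f
  have hsupp := IsLocalization.integerNormalization_support (nonZeroDivisors ℤ) f
  generalize IsLocalization.integerNormalization (nonZeroDivisors ℤ) f = P at hbf hsupp
  have hb0 : b ≠ 0 := nonZeroDivisors.ne_zero hb
  refine ⟨P, C (-b), fun h => hb0 (by simpa using h.2), ?_, ?_⟩
  · rw [← aeval_map_algebraMap ℚ α P, hbf, aeval_C, map_zsmul]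
    simp [mul_comm]
  · rw [natDegree_C, Nat.max_zero]
    exact (natDegree_le_natDegree (Finset.sup_mono hsupp)).trans_lt hdeg

lemma natDegree_minpoly_le_of_aeval_int {α : K} {P : Polynomial ℤ} (hP : P ≠ 0)
    (h : aeval α P = 0) : (minpoly ℚ α).natDegree ≤ P.natDegree := by
  have hinj : Function.Injective (algebraMap ℤ ℚ) := (algebraMap ℤ ℚ).injective_int
  rw [← natDegree_map_eq_of_injective hinj P]
  refine natDegree_le_of_dvd (minpoly.dvd ℚ α ?_) ((Polynomial.map_ne_zero_iff hinj).2 hP)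
  rw [aeval_map_algebraMap, h]

lemma IsMinimalPair.aeval_right_ne_zero {α β : K} (hα : IsAlgebraic ℚ α)
    (hβ : β ∈ Algebra.adjoin ℚ {α}) {P Q : Polynomial ℤ} (h : IsMinimalPair α β P Q) :
    aeval α Q ≠ 0 := by
  intro hQ
  obtain ⟨hne, hrel, hmin, -⟩ := h
  obtain ⟨P₁, Q₁, hne₁, hrel₁, hlt⟩ := exists_pair_natDegree_lt hα hβ
  have hle := (hmin P₁ Q₁ hne₁ hrel₁).trans_lt hlt
  have hP : aeval α P = 0 := by simpa [hQ] using hrel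
  refine hne ⟨?_, ?_⟩ <;> by_contra h0
  · exact absurd (natDegree_minpoly_le_of_aeval_int h0 hP)
      (not_le.2 ((le_max_left _ _).trans_lt hle))
  · exact absurd (natDegree_minpoly_le_of_aeval_int h0 hQ)
      (not_le.2 ((le_max_right _ _).trans_lt hle))

/-- If `W(α) = 0`, then `(P', Q')` is again a pair for `(α, β)`, of smaller degree. -/
lemma IsMinimalPair.wronskian_ne_zero {α β : K} (hα : IsAlgebraic ℚ α)
    (hβ : β ∈ Algebra.adjoin ℚ {α}) (hirr : ∀ q : ℚ, (q : K) ≠ β) {P Q : Polynomial ℤ}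
    (h : IsMinimalPair α β P Q) :
    aeval α (P * Q.derivative - Q * P.derivative) ≠ 0 := by
  intro hW
  have hQ := h.aeval_right_ne_zero hα hβ
  obtain ⟨-, hrel, hmin, -⟩ := h
  simp only [map_sub, map_mul] at hW
  have hder : aeval α P.derivative + β * aeval α Q.derivative = 0 := by
    refine (mul_eq_zero.1 ?_).resolve_left hQ
    linear_combination aeval α Q.derivative * hrel - hW
  have hdeg : max P.natDegree Q.natDegree = 0 := by
    by_contra hpos
    by_cases h0 : P.derivative = 0 ∧ Q.derivative = 0
    · rw [derivative_eq_zero.1 h0.1,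
        derivative_eq_zero.1 h0.2] at hpos
      exact hpos rfl
    · have h1 := hmin _ _ h0 hder
      have h2 := natDegree_derivative_le P
      have h3 := natDegree_derivative_le Q
      omega
  obtain ⟨a, rfl⟩ := natDegree_eq_zero.1 (show P.natDegree = 0 by omega)
  obtain ⟨b, rfl⟩ := natDegree_eq_zero.1 (show Q.natDegree = 0 by omega)
  simp only [eq_intCast, map_intCast] at hrel hQ
  apply hirr (-a / b)
  push_cast
  field_simp
  linear_combination -hrel

end Field

/-- Let `p` be a rational prime, let `α ∈ ℚ_p` be a `p`-adic algebraic number of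
degree `d` over `ℚ`, let `β ∈ ℚ(α)` be irrational, let `P, Q` be a minimal pair for
`(α, β)` and let `W = P·Q′ − Q·P′` be the Wronskian of `P` and `Q`. Then there exists
a positive real `C₁₄`, depending only on `α` and `β`, such that `|W(α)|_p ≥ C₁₄`. -/
theorem minimal_pair_wronskian_lower_bound_padic
    (p : ℕ) [Fact p.Prime]
    (α : ℚ_[p]) (hα : IsAlgebraic ℚ α) (d : ℕ) (hdeg : (minpoly ℚ α).natDegree = d)
    (β : ℚ_[p]) (hβmem : β ∈ Algebra.adjoin ℚ {α}) (hβirr : ∀ q : ℚ, (q : ℚ_[p]) ≠ β) :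
    ∃ C₁₄ : ℝ, 0 < C₁₄ ∧
      ∀ P Q : Polynomial ℤ, IsMinimalPair α β P Q →
        C₁₄ ≤ ‖Polynomial.aeval α (P * Q.derivative - Q * P.derivative)‖ := by
  rcases Set.eq_empty_or_nonempty
    {x : Polynomial ℤ × Polynomial ℤ | IsMinimalPair α β x.1 x.2} with he | hne
  · exact ⟨1, one_pos, fun P Q h => absurd (show (P, Q) ∈ _ from h) (he ▸ Set.notMem_empty _)⟩
  · obtain ⟨⟨P₀, Q₀⟩, h₀, hmin⟩ := Set.exists_min_image _
      (fun x : Polynomial ℤ × Polynomial ℤ =>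
        ‖aeval α (x.1 * derivative x.2 - x.2 * derivative x.1)‖)
      (finite_setOf_isMinimalPair α β) hne
    exact ⟨_, norm_pos_iff.2 (IsMinimalPair.wronskian_ne_zero hα hβmem hβirr h₀),
      fun P Q h => hmin (P, Q) h⟩
end

section
/- Let P, Q ∈ ℤ[x] be coprime polynomials of degrees r and s respectively, with r ≥ max(1, s). Let c_P be the leading coefficient of P, and set P(x,y) = y^r·P(x/y) and Q(x,y) = y^r·Q(x/y) (the degree-r homogenizations). Then for all coprime integers a and b, gcd(P(a,b), Q(a,b)) divides ϱ = |c_P^{r−s} · Res(P,Q)|, and moreover 1 ≤ ϱ ≤ (r+1)^r · max(H(P), H(Q))^{2r}. -/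
/-!
Up to reversing rows and columns, the Sylvester matrix is the transpose of Mathlib's, so `Res(P,Q)`
is `Polynomial.resultant P Q r s`, and `c_P^(r-s) * Res(P,Q)` is the determinant `D` of the
`2r × 2r` Sylvester matrix of `P` and `Q`, both regarded as having formal degree `r`.

* Divisibility. The row vector with entries `a^i b^(2r-1-i)` times this matrix has entries that are
  multiples of `P(a,b)` or `Q(a,b)`. Multiplying by the adjugate, a common divisor `d` of these two
  values divides `D a^(2r-1)` and `D b^(2r-1)`, hence `D`, as `a` and `b` are coprime.
* Nonvanishing. By Gauss's lemma `P` and `Q` remain coprime over `ℚ`, so their resultant is nonzero.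
* Upper bound. Hadamard's inequality applies to the Sylvester matrix: each of its `r + s` rows has at
  most `r + 1` nonzero entries, all of absolute value at most `H = max (H(P), H(Q))`. Together with
  `|c_P| ≤ H` this gives `D^2 ≤ (r+1)^(r+s) * H^(4r)`, and `s ≤ r`.
-/

open Polynomial

/-- The Sylvester matrix of `P` (of degree `r`) and `Q` (of degree `s`): an
`(s + r) × (s + r)` integer matrix whose first `s` rows carry the shifted
coefficients of `P` and whose last `r` rows carry the shifted coefficients of `Q`. -/
def sylvesterMatrix (P Q : Polynomial ℤ) (r s : ℕ) :
    Matrix (Fin (s + r)) (Fin (s + r)) ℤ :=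
  Matrix.of fun i j =>
    if (i : ℕ) < s then
      (if (i : ℕ) ≤ (j : ℕ) ∧ (j : ℕ) ≤ r + (i : ℕ) then P.coeff (r + (i : ℕ) - (j : ℕ)) else 0)
    else
      (if (i : ℕ) - s ≤ (j : ℕ) ∧ (j : ℕ) ≤ (i : ℕ) then Q.coeff ((i : ℕ) - (j : ℕ)) else 0)

/-- The resultant `Res(P, Q)` of `P` (of degree `r`) and `Q` (of degree `s`), as the
determinant of the Sylvester matrix. -/
def resultantZ (P Q : Polynomial ℤ) (r s : ℕ) : ℤ := (sylvesterMatrix P Q r s).det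

/-- The degree-`r` homogenization of an integer polynomial, evaluated at an integer
point `(a, b)`: if `P(x) = ∑ cᵢ xⁱ`, this is `∑_{i ≤ r} cᵢ aⁱ b^(r−i)`,
i.e. `b^r · P(a/b)`. -/
def homogEvalZ (P : Polynomial ℤ) (r : ℕ) (a b : ℤ) : ℤ :=
  ∑ i ∈ Finset.range (r + 1), P.coeff i * a ^ i * b ^ (r - i)

/-- The reversed transpose identification of the Sylvester matrix with Mathlib's. -/
lemma resultantZ_eq_resultant (P Q : ℤ[X]) (r s : ℕ) :
    resultantZ P Q r s = resultant P Q r s := by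
  let e : Fin (s + r) ≃ Fin (r + s) := (finCongr (add_comm s r)).trans Fin.revPerm
  have h : sylvesterMatrix P Q r s = ((sylvester P Q r s).submatrix e e).transpose := by
    ext i j
    have hei : ((e i : Fin (r + s)) : ℕ) = r + s - (i + 1) := by simp [e]
    have hej : ((e j : Fin (r + s)) : ℕ) = r + s - (j + 1) := by simp [e]
    have hi := i.2
    have hj := j.2
    simp only [Matrix.transpose_apply, Matrix.submatrix_apply, sylvesterMatrix, sylvester,
      Matrix.of_apply]
    generalize e i = i' at *
    generalize e j = j' at *
    induction i' using Fin.addCases with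
    | left k =>
      simp only [Fin.val_castAdd] at hei
      have hk := k.2
      simp only [Fin.addCases_left, Set.mem_Icc, hej]
      rw [if_neg (by omega)]
      refine if_congr (by omega) ?_ rfl
      congr 1; omega
    | right k =>
      simp only [Fin.val_natAdd] at hei
      have hk := k.2
      simp only [Fin.addCases_right, Set.mem_Icc, hej]
      rw [if_pos (by omega)]
      by_cases hc : (i : ℕ) ≤ j ∧ (j : ℕ) ≤ r + i
      · rw [if_pos hc, if_pos (by omega)]
        congr 1; omega
      · rw [if_neg hc, if_neg (by omega)]
  rw [resultantZ, h, Matrix.det_transpose, Matrix.det_submatrix_equiv_self, resultant]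

/-- The coordinates of the row vector `(a^i b^(2r-1-i))ᵢ` times a Sylvester matrix. -/
lemma sum_shift_eq_homogEvalZ (F : ℤ[X]) (r k : ℕ) (hk : k < r) (a b : ℤ) :
    ∑ i : Fin (r + r), a ^ (i : ℕ) * b ^ (r + r - 1 - i) *
      (if (i : ℕ) ∈ Set.Icc k (k + r) then F.coeff (i - k) else 0) =
    a ^ k * b ^ (r - 1 - k) * homogEvalZ F r a b := by
  rw [Fin.sum_univ_eq_sum_range (fun i => a ^ i * b ^ (r + r - 1 - i) *
      (if i ∈ Set.Icc k (k + r) then F.coeff (i - k) else 0)), homogEvalZ, Finset.mul_sum]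
  symm
  refine Finset.sum_of_injOn (fun i => i + k) (fun x _ y _ h => by simpa using h) ?_ ?_ ?_
  · intro x hx
    simp only [Finset.coe_range, Set.mem_Iio] at *
    omega
  · intro i hi hi'
    rw [if_neg, mul_zero]
    rintro ⟨h1, h2⟩
    exact hi' ⟨i - k, by simp; omega, by simp; omega⟩
  · intro i hi
    rw [Finset.mem_range] at hi
    rw [if_pos ⟨by omega, by omega⟩, Nat.add_sub_cancel,
      show r + r - 1 - (i + k) = (r - 1 - k) + (r - i) by omega]
    ring

lemma dvd_resultant_of_dvd_homogEvalZ (P Q : ℤ[X]) (r : ℕ) (hr : 1 ≤ r) (a b d : ℤ)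
    (hab : IsCoprime a b) (hP : d ∣ homogEvalZ P r a b) (hQ : d ∣ homogEvalZ Q r a b) :
    d ∣ resultant P Q r r := by
  set M := sylvester P Q r r with hM
  let v : Fin (r + r) → ℤ := fun i => a ^ (i : ℕ) * b ^ (r + r - 1 - i)
  have hw : ∀ j, d ∣ Matrix.vecMul v M j := by
    intro j
    induction j using Fin.addCases with
    | left k =>
      simp only [Matrix.vecMul, dotProduct, v, hM, sylvester, Matrix.of_apply, Fin.addCases_left]
      rw [sum_shift_eq_homogEvalZ Q r k k.2 a b]
      exact hQ.mul_left _
    | right k =>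
      simp only [Matrix.vecMul, dotProduct, v, hM, sylvester, Matrix.of_apply, Fin.addCases_right]
      rw [sum_shift_eq_homogEvalZ P r k k.2 a b]
      exact hP.mul_left _
  have hv : ∀ j, d ∣ M.det * v j := by
    intro j
    have h : Matrix.vecMul (Matrix.vecMul v M) M.adjugate j = M.det * v j := by
      rw [Matrix.vecMul_vecMul, Matrix.mul_adjugate, Matrix.vecMul_smul, Matrix.vecMul_one]
      rfl
    rw [← h]
    simp only [Matrix.vecMul.eq_1 (Matrix.vecMul v M), dotProduct]
    exact Finset.dvd_sum fun i _ => (hw i).mul_right _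
  have ha := hv ⟨r + r - 1, by omega⟩
  have hb := hv ⟨0, by omega⟩
  simp only [v, Nat.sub_self, pow_zero, mul_one, one_mul, Nat.sub_zero] at ha hb
  obtain ⟨x, y, hxy⟩ : IsCoprime (a ^ (r + r - 1)) (b ^ (r + r - 1)) := hab.pow
  have : M.det = x * (M.det * a ^ (r + r - 1)) + y * (M.det * b ^ (r + r - 1)) := by
    linear_combination (-M.det) * hxy
  rw [resultant, ← hM, this]
  exact dvd_add (ha.mul_left _) (hb.mul_left _)

/-- By Gauss's lemma, polynomials over `ℤ` without nonunit common divisors are coprime over `ℚ`. -/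
lemma isCoprime_map_rat (P Q : ℤ[X]) (hP0 : P ≠ 0)
    (hcop : ∀ g : ℤ[X], g ∣ P → g ∣ Q → IsUnit g) :
    IsCoprime (P.map (Int.castRingHom ℚ)) (Q.map (Int.castRingHom ℚ)) := by
  refine isCoprime_of_irreducible_dvd ?_ ?_
  · rintro ⟨h, -⟩
    exact hP0 ((Polynomial.map_eq_zero_iff Int.cast_injective).1 h)
  · intro g hg hgP hgQ
    obtain ⟨c, hc0, hc⟩ := IsLocalization.integerNormalization_spec (nonZeroDivisors ℤ) g
    set G := IsLocalization.integerNormalization (nonZeroDivisors ℤ) g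
    have hc0' : (c : ℚ) ≠ 0 := by exact_mod_cast nonZeroDivisors.ne_zero hc0
    have hG : G.map (Int.castRingHom ℚ) = C (c : ℚ) * g := by
      rw [← smul_eq_C_mul, ← algebraMap_int_eq, hc]
      ext i; simp
    have hGg : G.map (Int.castRingHom ℚ) ∣ g := by
      rw [hG]
      exact (isUnit_C.2 hc0'.isUnit).mul_left_dvd.2 dvd_rfl
    have hp : G.primPart.map (Int.castRingHom ℚ) ∣ g :=
      (Polynomial.map_dvd _ G.primPart_dvd).trans hGg
    have hdvd (F : ℤ[X]) (hF : g ∣ F.map (Int.castRingHom ℚ)) : G.primPart ∣ F :=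
      (IsPrimitive.Int.dvd_iff_map_cast_dvd_map_cast _ _ G.isPrimitive_primPart).2 (hp.trans hF)
    have hu := hcop _ (hdvd P hgP) (hdvd Q hgQ)
    have hdeg : g.natDegree = 0 := by
      rw [← natDegree_C_mul (p := g) hc0', ← hG,
        natDegree_map_eq_of_injective Int.cast_injective, ← natDegree_primPart]
      exact natDegree_eq_zero_of_isUnit hu
    exact hg.natDegree_pos.ne' hdeg

/-- Hadamard's inequality, squared. -/
lemma sq_det_le_prod_sum_sq {n : ℕ} (A : Matrix (Fin n) (Fin n) ℝ) :
    A.det ^ 2 ≤ ∏ i, ∑ j, A i j ^ 2 := by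
  let E := EuclideanSpace ℝ (Fin n)
  have : Fact (Module.finrank ℝ E = n) := ⟨by simp [E]⟩
  let b : OrthonormalBasis (Fin n) ℝ E := EuclideanSpace.basisFun (Fin n) ℝ
  let v : Fin n → E := fun i => WithLp.toLp 2 (A i)
  have h := b.toBasis.orientation.abs_volumeForm_apply_le v
  rw [b.toBasis.orientation.volumeForm_robust b rfl, Module.Basis.det_apply] at h
  have hA : b.toBasis.toMatrix v = A.transpose := by
    ext i j
    rw [Module.Basis.toMatrix_apply, OrthonormalBasis.coe_toBasis_repr_apply,
      EuclideanSpace.basisFun_repr]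
    rfl
  rw [hA, Matrix.det_transpose] at h
  calc A.det ^ 2 = |A.det| ^ 2 := (sq_abs _).symm
    _ ≤ (∏ i, ‖v i‖) ^ 2 := by gcongr
    _ = ∏ i, ∑ j, A i j ^ 2 := by
      rw [← Finset.prod_pow]
      refine Finset.prod_congr rfl fun i _ => ?_
      rw [EuclideanSpace.norm_sq_eq]
      simp [v]

lemma abs_coeff_le_polyHeight (P : ℤ[X]) (i : ℕ) : |(P.coeff i : ℝ)| ≤ polyHeight P := by
  rw [← Int.cast_abs, Int.abs_eq_natAbs, Int.cast_natCast, Nat.cast_le]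
  by_cases h : i ∈ P.support
  · exact Finset.le_sup (f := fun i => (P.coeff i).natAbs) h
  · simp [notMem_support_iff.1 h]

/-- Bounds the squared norm of a row vector supported in a window of `r + 1` consecutive columns. -/
lemma sum_sq_le_of_window {n r k : ℕ} (f : Fin n → ℝ) (H : ℝ)
    (hf : ∀ j, |f j| ≤ H) (hz : ∀ j : Fin n, f j ≠ 0 → k ≤ j ∧ (j : ℕ) ≤ k + r) :
    ∑ j, f j ^ 2 ≤ (r + 1) * H ^ 2 := by
  classical
  have hcard : (Finset.univ.filter fun j => f j ≠ 0).card ≤ r + 1 := by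
    have := Finset.card_le_card_of_injOn (s := Finset.univ.filter fun j => f j ≠ 0)
      (t := Finset.Icc k (k + r)) (fun j : Fin n => (j : ℕ))
      (fun j hj => by simpa using hz j (by simpa using hj)) Fin.val_injective.injOn
    simpa [Nat.card_Icc, add_assoc, add_comm] using (this.trans_eq (by simp; omega : _ = r + 1))
  calc ∑ j, f j ^ 2 = ∑ j ∈ Finset.univ.filter (fun j => f j ≠ 0), f j ^ 2 := by
        refine (Finset.sum_filter_of_ne fun j _ hj => ?_).symm
        exact fun h => hj (by simp [h])
    _ ≤ (Finset.univ.filter fun j => f j ≠ 0).card • H ^ 2 :=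
        Finset.sum_le_card_nsmul _ _ _ fun j _ => by
          rw [← sq_abs]
          exact pow_le_pow_left₀ (abs_nonneg _) (hf j) 2
    _ ≤ (r + 1) * H ^ 2 := by
        rw [nsmul_eq_mul]
        gcongr
        exact_mod_cast hcard

lemma sq_resultantZ_le (P Q : ℤ[X]) (r s : ℕ) (hsr : s ≤ r) (H : ℝ)
    (hHP : (polyHeight P : ℝ) ≤ H) (hHQ : (polyHeight Q : ℝ) ≤ H) :
    (resultantZ P Q r s : ℝ) ^ 2 ≤ ((r + 1) * H ^ 2) ^ (s + r) := by
  have hH : 0 ≤ H := (Nat.cast_nonneg _).trans hHP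
  have hdet : (resultantZ P Q r s : ℝ) = ((sylvesterMatrix P Q r s).map (Int.castRingHom ℝ)).det :=
    RingHom.map_det (Int.castRingHom ℝ) _
  rw [hdet]
  refine (sq_det_le_prod_sum_sq _).trans ?_
  calc _ ≤ ∏ _i : Fin (s + r), ((r + 1) * H ^ 2) := by
        refine Finset.prod_le_prod (fun i _ => by positivity) fun i _ => ?_
        refine sum_sq_le_of_window (k := if (i : ℕ) < s then i else i - s) _ H ?_ ?_
        · intro j
          simp only [Matrix.map_apply, sylvesterMatrix, Matrix.of_apply, eq_intCast]
          split_ifs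
          · exact (abs_coeff_le_polyHeight _ _).trans hHP
          · simpa using hH
          · exact (abs_coeff_le_polyHeight _ _).trans hHQ
          · simpa using hH
        · intro j
          simp only [Matrix.map_apply, sylvesterMatrix, Matrix.of_apply, eq_intCast]
          split_ifs with h1 h2 h2
          · intro _; omega
          · simp
          -- The window `[i - s, i]` of a row of `Q` has length `s + 1 ≤ r + 1`.
          · intro _; omega
          · simp
    _ = _ := by simp

/-- Let `P, Q ∈ ℤ[x]` be coprime polynomials of degrees `r` and `s` respectively,
with `r ≥ max (1, s)`. Let `c_P` be the leading coefficient of `P` and let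
`P(x,y) = y^r·P(x/y)`, `Q(x,y) = y^r·Q(x/y)` be the degree-`r` homogenizations. Then
for all coprime integers `a` and `b`, `gcd (P(a,b), Q(a,b))` divides
`ϱ = |c_P^(r−s) · Res(P,Q)|`, and moreover
`1 ≤ ϱ ≤ (r+1)^r · max (H(P), H(Q))^(2r)`. -/
theorem gcd_of_homogenized_values_divides_resultant
    (P Q : Polynomial ℤ) (r s : ℕ)
    (hP : P.natDegree = r) (hQ : Q.natDegree = s) (hr1 : 1 ≤ r) (hsr : s ≤ r)
    (hcop : ∀ g : Polynomial ℤ, g ∣ P → g ∣ Q → IsUnit g) :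
    (∀ a b : ℤ, IsCoprime a b →
      (Int.gcd (homogEvalZ P r a b) (homogEvalZ Q r a b) : ℤ) ∣
        |P.leadingCoeff ^ (r - s) * resultantZ P Q r s|) ∧
    1 ≤ |P.leadingCoeff ^ (r - s) * resultantZ P Q r s| ∧
    (|P.leadingCoeff ^ (r - s) * resultantZ P Q r s| : ℝ) ≤
      ((r : ℝ) + 1) ^ r * (max (polyHeight P) (polyHeight Q) : ℝ) ^ (2 * r) := by
  have hP0 : P ≠ 0 := by
    rintro rfl
    simp at hP
    omega
  have hlc : P.leadingCoeff ≠ 0 := leadingCoeff_ne_zero.2 hP0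
  have hres0 : resultantZ P Q r s ≠ 0 := by
    have h := resultant_ne_zero _ _ (isCoprime_map_rat P Q hP0 hcop)
    rw [natDegree_map_eq_of_injective Int.cast_injective,
      natDegree_map_eq_of_injective Int.cast_injective, hP, hQ, resultant_map_map,
      ← resultantZ_eq_resultant] at h
    intro h0
    exact h (by rw [h0, map_zero])
  have heq : P.leadingCoeff ^ (r - s) * resultantZ P Q r s = resultant P Q r r := by
    have h := resultant_add_right_deg P Q r s (r - s) hQ.le
    rw [Nat.add_sub_cancel' hsr] at h
    rw [h, resultantZ_eq_resultant, leadingCoeff, hP]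
  refine ⟨fun a b hab => ?_, ?_, ?_⟩
  · rw [dvd_abs, heq]
    exact dvd_resultant_of_dvd_homogEvalZ P Q r hr1 a b _ hab (Int.gcd_dvd_left ..)
      (Int.gcd_dvd_right ..)
  · exact Int.one_le_abs (mul_ne_zero (pow_ne_zero _ hlc) hres0)
  · set H : ℝ := max (polyHeight P : ℝ) (polyHeight Q)
    have hH : 0 ≤ H := (Nat.cast_nonneg _).trans (le_max_left _ _)
    have h1 : |(P.leadingCoeff : ℝ)| ≤ H :=
      (abs_coeff_le_polyHeight P _).trans (le_max_left _ _)
    have h2 := sq_resultantZ_le P Q r s hsr H (le_max_left _ _) (le_max_right _ _)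
    refine abs_le_of_sq_le_sq ?_ (by positivity)
    calc ((P.leadingCoeff : ℝ) ^ (r - s) * (resultantZ P Q r s : ℝ)) ^ 2
        = (|(P.leadingCoeff : ℝ)| ^ (r - s)) ^ 2 * (resultantZ P Q r s : ℝ) ^ 2 := by
          rw [mul_pow, ← abs_pow, sq_abs]
      _ ≤ (H ^ (r - s)) ^ 2 * ((r + 1) * H ^ 2) ^ (s + r) := by gcongr
      _ = ((r : ℝ) + 1) ^ (s + r) * H ^ ((r - s) * 2 + 2 * (s + r)) := by
          rw [mul_pow, ← pow_mul, ← pow_mul, pow_add H]; ring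
      _ ≤ ((r : ℝ) + 1) ^ (r + r) * H ^ ((r - s) * 2 + 2 * (s + r)) := by
          gcongr
          linarith [(Nat.cast_nonneg r : (0 : ℝ) ≤ r)]
      _ = (((r : ℝ) + 1) ^ r * H ^ (2 * r)) ^ 2 := by
          rw [mul_pow, ← pow_mul, ← pow_mul, show (r - s) * 2 + 2 * (s + r) = 2 * r * 2 by omega,
            mul_two r]
end

section
/- Let P(x,y) = ∏_{i=1}^r (α_i x + β_i y) and Q(x,y) = ∏_{j=1}^r (γ_j x + δ_j y) be binary forms of degree r ≥ 1 with complex coefficients, and set C = min_{i,j} |α_i δ_j − β_i γ_j| / max_{i,j} max(|α_i| + |γ_j|, |β_i| + |δ_j|). Suppose P and Q have no linear factor in common, so that C > 0. Then for all pairs (a,b) ∈ ℂ², max(|P(a,b)|, |Q(a,b)|) ≥ C^r · H(a,b)^r. -/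
/-!
For a single pair of linear forms `L = αx + βy`, `M = γx + δy`, Cramer's rule expresses
`(αδ - βγ) a` and `(αδ - βγ) b` as combinations of `L(a,b)` and `M(a,b)`, so
`|αδ - βγ| H(a,b) ≤ max (|α| + |γ|, |β| + |δ|) · max (|L(a,b)|, |M(a,b)|)`.
Hence `C · H(a,b) ≤ max (|Lᵢ(a,b)|, |Mⱼ(a,b)|)` for all `i, j`. Either every `|Lᵢ(a,b)|` is at
least `C · H(a,b)`, or one of them is smaller and then every `|Mⱼ(a,b)|` is at least
`C · H(a,b)`; multiplying the `r` bounds gives the claim.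
-/

/-- Cramer's rule for a pair of linear forms, in norm. -/
lemma norm_det_mul_height_le (α β γ δ a b : ℂ) :
    ‖α * δ - β * γ‖ * max ‖a‖ ‖b‖ ≤
      max (‖α‖ + ‖γ‖) (‖β‖ + ‖δ‖) * max ‖α * a + β * b‖ ‖γ * a + δ * b‖ := by
  set m := max ‖α * a + β * b‖ ‖γ * a + δ * b‖ with hm
  have hL : ‖α * a + β * b‖ ≤ m := le_max_left _ _
  have hM : ‖γ * a + δ * b‖ ≤ m := le_max_right _ _
  have hm0 : 0 ≤ m := (norm_nonneg _).trans hL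
  have key : ∀ u v : ℂ, ‖u * (α * a + β * b) - v * (γ * a + δ * b)‖ ≤ (‖v‖ + ‖u‖) * m := by
    intro u v
    refine (norm_sub_le _ _).trans ?_
    rw [norm_mul, norm_mul, add_mul, add_comm]
    gcongr
  rw [mul_max_of_nonneg _ _ (norm_nonneg _)]
  refine max_le ?_ ?_
  · have h := key δ β
    rw [show δ * (α * a + β * b) - β * (γ * a + δ * b) = (α * δ - β * γ) * a by ring,
      norm_mul] at h
    exact h.trans (mul_le_mul_of_nonneg_right (le_max_right _ _) hm0)
  · have h := key γ α
    rw [show γ * (α * a + β * b) - α * (γ * a + δ * b) = -((α * δ - β * γ) * b) by ring,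
      norm_neg, norm_mul] at h
    exact h.trans (mul_le_mul_of_nonneg_right (le_max_left _ _) hm0)

lemma pow_le_norm_prod {r : ℕ} {c : ℝ} (hc : 0 ≤ c) (f : Fin r → ℂ) (h : ∀ i, c ≤ ‖f i‖) :
    c ^ r ≤ ‖∏ i, f i‖ := by
  rw [norm_prod]
  simpa using Finset.prod_le_prod (s := Finset.univ) (fun _ _ => hc) (fun i _ => h i)

/-- Let `P(x,y) = ∏ᵢ (αᵢ x + βᵢ y)` and `Q(x,y) = ∏ⱼ (γⱼ x + δⱼ y)` be binary forms
of degree `r ≥ 1` with complex coefficients, and set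
`C = minᵢⱼ |αᵢ δⱼ − βᵢ γⱼ| / maxᵢⱼ max (|αᵢ| + |γⱼ|, |βᵢ| + |δⱼ|)`. Suppose `P` and
`Q` have no linear factor in common (`αᵢ δⱼ − βᵢ γⱼ ≠ 0` for all `i, j`), so that
`C > 0`. Then for all `(a, b) ∈ ℂ²`,
`max (|P(a,b)|, |Q(a,b)|) ≥ C^r · H(a,b)^r`, where `H(a,b) = max (|a|, |b|)`. -/
theorem two_forms_lower_bound
    (r : ℕ) (hr : 1 ≤ r) (A B Γ Δ : Fin r → ℂ)
    (hnc : ∀ i j : Fin r, A i * Δ j - B i * Γ j ≠ 0)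
    (C : ℝ)
    (hC : C = (⨅ p : Fin r × Fin r, ‖A p.1 * Δ p.2 - B p.1 * Γ p.2‖) /
      (⨆ p : Fin r × Fin r, max (‖A p.1‖ + ‖Γ p.2‖) (‖B p.1‖ + ‖Δ p.2‖))) :
    0 < C ∧
      ∀ a b : ℂ,
        C ^ r * (max ‖a‖ ‖b‖) ^ r ≤
          max ‖∏ i : Fin r, (A i * a + B i * b)‖ ‖∏ j : Fin r, (Γ j * a + Δ j * b)‖ := by
  have : Nonempty (Fin r) := ⟨⟨0, hr⟩⟩
  set D : Fin r × Fin r → ℝ := fun p => ‖A p.1 * Δ p.2 - B p.1 * Γ p.2‖ with hD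
  set S : Fin r × Fin r → ℝ := fun p => max (‖A p.1‖ + ‖Γ p.2‖) (‖B p.1‖ + ‖Δ p.2‖) with hS
  have hDle : ∀ p, iInf D ≤ D p := ciInf_le (Set.finite_range D).bddBelow
  have hSle : ∀ p, S p ≤ iSup S := le_ciSup (Set.finite_range S).bddAbove
  have hDpos : 0 < iInf D := by
    obtain ⟨p, hp⟩ := exists_eq_ciInf_of_finite (f := D)
    rw [← hp]
    exact norm_pos_iff.mpr (hnc p.1 p.2)
  have hSpos : 0 < iSup S := by
    obtain ⟨p⟩ : Nonempty (Fin r × Fin r) := inferInstance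
    refine lt_of_lt_of_le ?_ (hSle p)
    by_contra! h
    -- a vanishing maximum forces `A p.1 = B p.1 = 0`, hence a vanishing determinant
    have h1 := (le_max_left _ _).trans h
    have h2 := (le_max_right _ _).trans h
    have hA : A p.1 = 0 := norm_le_zero_iff.mp (by linarith [norm_nonneg (Γ p.2)])
    have hB : B p.1 = 0 := norm_le_zero_iff.mp (by linarith [norm_nonneg (Δ p.2)])
    exact hnc p.1 p.2 (by simp [hA, hB])
  have hCpos : 0 < C := hC ▸ div_pos hDpos hSpos
  refine ⟨hCpos, fun a b => ?_⟩
  have hH : 0 ≤ max ‖a‖ ‖b‖ := (norm_nonneg a).trans (le_max_left _ _)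
  have pair : ∀ i j, C * max ‖a‖ ‖b‖ ≤ max ‖A i * a + B i * b‖ ‖Γ j * a + Δ j * b‖ := by
    intro i j
    rw [hC, div_mul_eq_mul_div, div_le_iff₀ hSpos]
    calc iInf D * max ‖a‖ ‖b‖ ≤ D (i, j) * max ‖a‖ ‖b‖ :=
          mul_le_mul_of_nonneg_right (hDle _) hH
      _ ≤ S (i, j) * max ‖A i * a + B i * b‖ ‖Γ j * a + Δ j * b‖ :=
          norm_det_mul_height_le _ _ _ _ _ _
      _ ≤ iSup S * max ‖A i * a + B i * b‖ ‖Γ j * a + Δ j * b‖ :=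
          mul_le_mul_of_nonneg_right (hSle _) ((norm_nonneg _).trans (le_max_left _ _))
      _ = _ := mul_comm _ _
  have hCH : 0 ≤ C * max ‖a‖ ‖b‖ := mul_nonneg hCpos.le hH
  rw [← mul_pow]
  by_cases h : ∀ i, C * max ‖a‖ ‖b‖ ≤ ‖A i * a + B i * b‖
  · exact (pow_le_norm_prod hCH _ h).trans (le_max_left _ _)
  · push Not at h
    obtain ⟨i, hi⟩ := h
    refine (pow_le_norm_prod hCH _ fun j => ?_).trans (le_max_right _ _)
    exact (le_max_iff.mp (pair i j)).resolve_left hi.not_ge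
end
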